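/- arXiv:2512.18377 — 2 statements merged into one kernel-verified Lean document; each statement's English description precedes it below -/
import Mathlib

section
/- Let X be a Banach space, T > 0, p ≥ 6 an integer, F ∈ C^p([0,T] × X, X), and suppose the initial value problem u'(t) = F(t, u(t)) on [0,T], u(0) = u₀, has a unique solution u ∈ C^{p+1}([0,T], X). For a positive integer N let k = T/N, t_n = nk, and let {u^{4,n}}_{n=0}^{N} be the sequence produced by the classical fourth-order Runge–Kutta method: u^{4,0} = u₀ and u^{4,n+1} = u^{4,n} + (k/6)(K₁ + 2K₂ + 2K₃ + K₄), where K₁ = F(t_n, u^{4,n}), K₂ = F(t_n + k/2, u^{4,n} + (k/2)K₁), K₃ = F(t_n + k/2, u^{4,n} + (k/2)K₂), K₄ = F(t_n + k, u^{4,n} + kK₃). Then for every integer m with 0 ≤ m ≤ p − 4 there exists a constant C, independent of k (depending only on m, T, F and the derivatives of u), such that ‖D₊^m(u^{4,n} − u(t_n))‖ ≤ C k^4 for all n = 0, 1, …, N − m, where D₊^m applied to the sequence e^n = u^{4,n} − u(t_n) is D₊^m e^n = k^{−m} Σ_{i=0}^{m} (−1)^i binom(m,i) e^{n+m−i}. 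-/
open Finset

variable {X : Type*} [NormedAddCommGroup X] [NormedSpace ℝ X] [CompleteSpace X]

/-- One step of the classical fourth-order Runge–Kutta method for `u' = F(t,u)`
from time `t` with step `h`. -/
noncomputable def rk4Step (F : ℝ → X → X) (t h : ℝ) (x : X) : X :=
  let K1 := F t x
  let K2 := F (t + h / 2) (x + (h / 2) • K1)
  let K3 := F (t + h / 2) (x + (h / 2) • K2)
  let K4 := F (t + h) (x + h • K3)
  x + (h / 6) • (K1 + (2 : ℝ) • K2 + (2 : ℝ) • K3 + K4)


universe v w

namespace DC

section seqs

variable {ι ι' : Type*} {E E₁ E₂ : Type*} [NormedAddCommGroup E] [NormedSpace ℝ E]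
  [NormedAddCommGroup E₁] [NormedSpace ℝ E₁] [NormedAddCommGroup E₂] [NormedSpace ℝ E₂]

/-- forward difference quotient -/
noncomputable def dl (k : ℝ) (y : ℕ → E) : ℕ → E := fun n => k⁻¹ • (y (n + 1) - y n)

theorem dl_add (k : ℝ) (l : ℕ) : ∀ (y z : ℕ → E),
    (dl k)^[l] (fun n => y n + z n) = fun n => (dl k)^[l] y n + (dl k)^[l] z n := by
  induction l with
  | zero => intro y z; rfl
  | succ l ih =>
    intro y z
    simp only [Function.iterate_succ, Function.comp]
    rw [← ih]
    congr 1
    funext n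
    simp only [dl]
    rw [← smul_add]; congr 1; abel

theorem dl_map (k : ℝ) (l : ℕ) (A : E →L[ℝ] E₁) : ∀ (y : ℕ → E),
    (dl k)^[l] (fun n => A (y n)) = fun n => A ((dl k)^[l] y n) := by
  induction l with
  | zero => intro y; rfl
  | succ l ih =>
    intro y
    simp only [Function.iterate_succ, Function.comp]
    rw [← ih]
    congr 1
    funext n
    simp [dl]

theorem dl_smul (k c : ℝ) (l : ℕ) (y : ℕ → E) :
    (dl k)^[l] (fun n => c • (y n)) = fun n => c • ((dl k)^[l] y n) := by
  simpa using dl_map k l (c • ContinuousLinearMap.id ℝ E) y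

theorem dl_sub (k : ℝ) (l : ℕ) (y z : ℕ → E) :
    (dl k)^[l] (fun n => y n - z n) = fun n => (dl k)^[l] y n - (dl k)^[l] z n := by
  have h1 := dl_add k l y (fun n => (-1 : ℝ) • z n)
  rw [dl_smul] at h1
  simpa [sub_eq_add_neg] using h1

theorem dl_shift (k : ℝ) (l : ℕ) : ∀ (y : ℕ → E),
    (dl k)^[l] (fun n => y (n + 1)) = fun n => (dl k)^[l] y (n + 1) := by
  induction l with
  | zero => intro y; rfl
  | succ l ih =>
    intro y
    simp only [Function.iterate_succ, Function.comp]
    rw [← ih]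
    rfl

theorem dl_congr (k : ℝ) (l : ℕ) : ∀ (y z : ℕ → E) (n : ℕ),
    (∀ j, j ≤ n + l → y j = z j) → (dl k)^[l] y n = (dl k)^[l] z n := by
  induction l with
  | zero => intro y z n h; exact h n (by omega)
  | succ l ih =>
    intro y z n h
    simp only [Function.iterate_succ, Function.comp]
    apply ih
    intro j hj
    simp only [dl]
    rw [h j (by omega), h (j + 1) (by omega)]

/-- differences up to order `m` are `O(k^r)` uniformly in the family -/
def O (k : ι → ℝ) (L : ι → ℕ) (r m : ℕ) (y : ι → ℕ → E) : Prop :=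
  ∃ C, ∀ i, ∀ l ≤ m, ∀ n, n + l < L i → ‖((dl (k i))^[l] (y i)) n‖ ≤ C * (k i) ^ r

variable {k : ι → ℝ} {L : ι → ℕ} {r s m : ℕ} {y z : ι → ℕ → E}

theorem O.nn (hk : ∀ i, 0 < k i) (h : O k L r m y) : ∃ C, 0 ≤ C ∧
    ∀ i, ∀ l ≤ m, ∀ n, n + l < L i → ‖((dl (k i))^[l] (y i)) n‖ ≤ C * (k i) ^ r := by
  obtain ⟨C, hC⟩ := h
  refine ⟨max C 0, le_max_right _ _, fun i l hl n hn => (hC i l hl n hn).trans ?_⟩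
  exact mul_le_mul_of_nonneg_right (le_max_left _ _) (pow_nonneg (hk i).le _)

theorem O_zero_iff : O k L r 0 y ↔ ∃ C, ∀ i, ∀ n, n < L i → ‖y i n‖ ≤ C * (k i) ^ r := by
  constructor
  · rintro ⟨C, h⟩; exact ⟨C, fun i n hn => h i 0 le_rfl n hn⟩
  · rintro ⟨C, h⟩; refine ⟨C, fun i l hl n hn => ?_⟩
    obtain rfl : l = 0 := by omega
    exact h i n hn

theorem O.mono {m' : ℕ} (h : O k L r m y) (hm : m' ≤ m) : O k L r m' y := by
  obtain ⟨C, hC⟩ := h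
  exact ⟨C, fun i l hl n hn => hC i l (hl.trans hm) n hn⟩

theorem O.monoL {L' : ι → ℕ} (h : O k L r m y) (hm : ∀ i, L' i ≤ L i) : O k L' r m y := by
  obtain ⟨C, hC⟩ := h
  exact ⟨C, fun i l hl n hn => hC i l hl n (hn.trans_le (hm i))⟩

theorem O_succ_iff (hk : ∀ i, 0 < k i) : O k L r (m + 1) y ↔
    O k L r 0 y ∧ O k (fun i => L i - 1) r m (fun i => dl (k i) (y i)) := by
  constructor
  · intro h
    refine ⟨h.mono (by omega), ?_⟩
    obtain ⟨C, hC⟩ := h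
    refine ⟨C, fun i l hl n hn => ?_⟩
    have hn1 : n + l < L i - 1 := hn
    exact hC i (l + 1) (by omega) n (by omega)
  · rintro ⟨h0, h1⟩
    obtain ⟨C, hC0, hC⟩ := h0.nn hk
    obtain ⟨C', hC0', hC'⟩ := h1.nn hk
    refine ⟨C + C', fun i l hl n hn => ?_⟩
    have hp := pow_nonneg (hk i).le r
    rcases l with _ | l
    · exact (hC i 0 le_rfl n hn).trans (by nlinarith)
    · exact (hC' i l (by omega) n (by omega)).trans (by nlinarith)

theorem O.congr (h : O k L r m y) (hyz : ∀ i n, n < L i → z i n = y i n) : O k L r m z := by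
  obtain ⟨C, hC⟩ := h
  refine ⟨C, fun i l hl n hn => ?_⟩
  rw [dl_congr _ _ _ (y i) n (fun j hj => hyz i j (by omega))]
  exact hC i l hl n hn

theorem O.add (hy : O k L r m y) (hz : O k L r m z) : O k L r m (fun i n => y i n + z i n) := by
  obtain ⟨C, hC⟩ := hy
  obtain ⟨C', hC'⟩ := hz
  refine ⟨C + C', fun i l hl n hn => ?_⟩
  rw [dl_add, add_mul]
  exact (norm_add_le _ _).trans (add_le_add (hC i l hl n hn) (hC' i l hl n hn))

theorem O.smulk (hy : O k L r m y) (hk : ∀ i, 0 < k i) (c : ι → ℝ) (B : ℝ)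
    (hc : ∀ i, |c i| ≤ B * (k i) ^ s) : O k L (s + r) m (fun i n => c i • y i n) := by
  obtain ⟨C, hC0, hC⟩ := hy.nn hk
  refine ⟨B * C, fun i l hl n hn => ?_⟩
  rw [dl_smul, norm_smul, Real.norm_eq_abs]
  calc _ ≤ (B * (k i) ^ s) * (C * (k i) ^ r) :=
        mul_le_mul (hc i) (hC i l hl n hn) (norm_nonneg _) ((abs_nonneg _).trans (hc i))
    _ = _ := by rw [pow_add]; ring

theorem O.smul (hy : O k L r m y) (hk : ∀ i, 0 < k i) (c : ℝ) :
    O k L r m (fun i n => c • y i n) := by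
  have := hy.smulk (s := 0) hk (fun _ => c) |c| (by simp)
  simpa using this

theorem O.kpow (hy : O k L r m y) (hk : ∀ i, 0 < k i) (c : ℝ) (s : ℕ) :
    O k L (s + r) m (fun i n => (c * (k i) ^ s) • y i n) := by
  refine hy.smulk hk (fun i => c * (k i) ^ s) |c| (fun i => ?_)
  rw [abs_mul, abs_of_pos (pow_pos (hk i) s)]

theorem O.sub (hk : ∀ i, 0 < k i) (hy : O k L r m y) (hz : O k L r m z) :
    O k L r m (fun i n => y i n - z i n) := by
  have := hy.add (hz.smul hk (-1))
  simpa [sub_eq_add_neg] using this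

theorem O.weak {K : ℝ} (hk : ∀ i, 0 < k i) (hK : ∀ i, k i ≤ K) (hy : O k L r m y) {r' : ℕ}
    (hr : r' ≤ r) : O k L r' m y := by
  obtain ⟨C, hC0, hC⟩ := hy.nn hk
  refine ⟨C * K ^ (r - r'), fun i l hl n hn => (hC i l hl n hn).trans ?_⟩
  rw [mul_assoc, show (k i) ^ r = (k i) ^ (r - r') * (k i) ^ r' by rw [← pow_add]; congr 1; omega]
  have := pow_le_pow_left₀ (hk i).le (hK i) (r - r')
  have h2 := pow_nonneg (hk i).le r'
  exact mul_le_mul_of_nonneg_left (mul_le_mul_of_nonneg_right this h2) hC0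

theorem O.map (hy : O k L r m y) (A : E →L[ℝ] E₁) :
    O k L r m (fun i n => A (y i n)) := by
  obtain ⟨C, hC⟩ := hy
  refine ⟨‖A‖ * C, fun i l hl n hn => ?_⟩
  rw [dl_map, mul_assoc]
  exact (A.le_opNorm _).trans (mul_le_mul_of_nonneg_left (hC i l hl n hn) (norm_nonneg _))

theorem O.shift (hy : O k L r m y) : O k (fun i => L i - 1) r m (fun i n => y i (n + 1)) := by
  obtain ⟨C, hC⟩ := hy
  refine ⟨C, fun i l hl n hn => ?_⟩
  rw [dl_shift]
  have hn1 : n + l < L i - 1 := hn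
  exact hC i l hl (n + 1) (by omega)

theorem O.reindex (hy : O k L r m y) (f : ι' → ι) :
    O (fun j => k (f j)) (fun j => L (f j)) r m (fun j => y (f j)) := by
  obtain ⟨C, hC⟩ := hy
  exact ⟨C, fun i => hC (f i)⟩

theorem O.bilin (hk : ∀ i, 0 < k i) (B : E →L[ℝ] E₁ →L[ℝ] E₂) (m : ℕ) :
    ∀ (L : ι → ℕ) (a : ι → ℕ → E) (b : ι → ℕ → E₁), O k L r m a → O k L s m b →
      O k L (r + s) m (fun i n => B (a i n) (b i n)) := by
  have h0 : ∀ (L : ι → ℕ) (a : ι → ℕ → E) (b : ι → ℕ → E₁), O k L r 0 a → O k L s 0 b →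
      O k L (r + s) 0 (fun i n => B (a i n) (b i n)) := by
    intro L a b ha hb
    obtain ⟨C, hC0, hC⟩ := ha.nn hk
    obtain ⟨C', hC0', hC'⟩ := hb.nn hk
    refine O_zero_iff.2 ⟨‖B‖ * C * C', fun i n hn => ?_⟩
    have h1 := hC i 0 le_rfl n hn
    have h2 := hC' i 0 le_rfl n hn
    calc _ ≤ ‖B‖ * ‖a i n‖ * ‖b i n‖ := B.le_opNorm₂ _ _
      _ ≤ ‖B‖ * (C * k i ^ r) * (C' * k i ^ s) := by
        have := norm_nonneg B
        have := pow_nonneg (hk i).le r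
        gcongr
        · exact h1
        · exact h2
      _ = _ := by rw [pow_add]; ring
  induction m with
  | zero => exact h0
  | succ m ih =>
    intro L a b ha hb
    rw [O_succ_iff hk]
    refine ⟨h0 L a b (ha.mono (by omega)) (hb.mono (by omega)), ?_⟩
    have h1 := ih _ _ _ ((O_succ_iff hk).1 ha).2 ((hb.mono (Nat.le_succ m)).monoL
      (L' := fun i => L i - 1) (by intro i; simp))
    have h2 := ih _ _ _ (ha.mono (Nat.le_succ m)).shift ((O_succ_iff hk).1 hb).2
    refine (h1.add h2).congr ?_
    intro i n _
    simp only [dl, map_smul, map_sub, _root_.smul_apply,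
      _root_.sub_apply]
    rw [← smul_add]; congr 1; abel

theorem O.app (hk : ∀ i, 0 < k i) {a : ι → ℕ → (E →L[ℝ] E₁)}
    (ha : O k L r m a) (hy : O k L s m y) : O k L (r + s) m (fun i n => a i n (y i n)) :=
  O.bilin hk (ContinuousLinearMap.id ℝ (E →L[ℝ] E₁)) m L a y ha hy

theorem O.prodMk {a : ι → ℕ → E₁}
    (ha : O k L r m a) (hy : O k L r m y) : O k L r m (fun i n => (a i n, y i n)) := by
  have := (ha.map (ContinuousLinearMap.inl ℝ E₁ E)).add (hy.map (ContinuousLinearMap.inr ℝ E₁ E))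
  simpa using this

theorem O_const (c : ι → E) (B : ℝ) (hc : ∀ i, ‖c i‖ ≤ B * (k i) ^ r) :
    O k L r m (fun i _ => c i) := by
  have hB : ∀ i, 0 ≤ B * (k i) ^ r := fun i => (norm_nonneg _).trans (hc i)
  have hz : ∀ l (κ : ℝ), (dl κ)^[l] (fun _ => (0 : E)) = fun _ => 0 := by
    intro l κ
    have := dl_smul κ 0 l (fun _ => (0 : E))
    simpa using this
  refine ⟨B, fun i l hl n hn => ?_⟩
  rcases l with _ | l
  · exact hc i
  · simp only [Function.iterate_succ, Function.comp]
    have : dl (k i) (fun _ : ℕ => c i) = fun _ => (0 : E) := by funext n; simp [dl]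
    rw [this, hz]
    simpa using hB i

theorem O_time (hk : ∀ i, 0 < k i) {T : ℝ} (hT : ∀ i n, n < L i → (n : ℝ) * k i ≤ T) (m : ℕ) :
    O k L 0 m (fun i n => (n : ℝ) * k i) := by
  have h0 : O k L 0 0 (fun i n => (n : ℝ) * k i) := by
    refine O_zero_iff.2 ⟨T, fun i n hn => ?_⟩
    have := hT i n hn
    rw [Real.norm_of_nonneg (mul_nonneg (Nat.cast_nonneg _) (hk i).le)]
    simpa using this
  rcases m with _ | m
  · exact h0
  · rw [O_succ_iff hk]
    refine ⟨h0, ?_⟩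
    have : O k (fun i => L i - 1) 0 m (fun i _ => (1 : ℝ)) :=
      O_const (fun _ => (1 : ℝ)) 1 (by simp)
    refine this.congr (fun i n _ => ?_)
    have := (hk i).ne'
    simp only [dl, smul_eq_mul]; push_cast; field_simp; ring

theorem O_mvt (Y Y' : ι → ℝ → ℕ → E)
    (hd : ∀ i n, n < L i → ∀ s ∈ Set.Icc (0 : ℝ) 1,
      HasDerivWithinAt (fun s => Y i s n) (Y' i s n) (Set.Icc 0 1) s)
    (hO : O (ι := ι × Set.Icc (0 : ℝ) 1) (fun q => k q.1) (fun q => L q.1) r m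
      (fun q => Y' q.1 q.2)) :
    O k L r m (fun i n => Y i 1 n - Y i 0 n) := by
  obtain ⟨C, hC⟩ := hO
  refine ⟨C, fun i l hl n hn => ?_⟩
  have key : ∀ l : ℕ, ∀ (Z Z' : ℝ → ℕ → E) (n : ℕ) (s : ℝ),
      (∀ j, j ≤ n + l → HasDerivWithinAt (fun s => Z s j) (Z' s j) (Set.Icc 0 1) s) →
      HasDerivWithinAt (fun s => (dl (k i))^[l] (Z s) n) ((dl (k i))^[l] (Z' s) n)
        (Set.Icc 0 1) s := by
    intro l
    induction l with
    | zero => intro Z Z' n s h; exact h n (by omega)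
    | succ l ih =>
      intro Z Z' n s h
      simp only [Function.iterate_succ, Function.comp]
      refine ih (fun s => dl (k i) (Z s)) (fun s => dl (k i) (Z' s)) n s ?_
      intro j hj
      exact ((h (j + 1) (by omega)).sub (h j (by omega))).const_smul _
  rw [dl_sub]
  refine norm_image_sub_le_of_norm_deriv_le_segment_01'
    (f := fun s => (dl (k i))^[l] (Y i s) n) (f' := fun s => (dl (k i))^[l] (Y' i s) n) ?_ ?_
  · intro s hs
    exact key l (Y i) (Y' i) n s (fun j hj => hd i j (by omega) s hs)
  · intro s hs
    exact hC (i, ⟨s, Set.Ico_subset_Icc_self hs⟩) l hl n hn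

end seqs

end DC

namespace DC

/-- functions with `m` bounded derivatives on `D` -/
def CB {Y : Type v} [NormedAddCommGroup Y] [NormedSpace ℝ Y] (D : Set Y) :
    ℕ → ∀ {Z : Type (max v w)} [NormedAddCommGroup Z] [NormedSpace ℝ Z], (Y → Z) → Prop
  | 0, _, _, _, G => ∃ C, ∀ y ∈ D, ‖G y‖ ≤ C
  | m + 1, Z, _, _, G => (∃ C, ∀ y ∈ D, ‖G y‖ ≤ C) ∧ ∃ G' : Y → Y →L[ℝ] Z,
      (∀ y ∈ D, HasFDerivWithinAt G (G' y) D y) ∧ CB D m G'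

section comp

variable {Y : Type v} [NormedAddCommGroup Y] [NormedSpace ℝ Y] {D : Set Y}

theorem CB.bdd {m : ℕ} {Z : Type (max v w)} [NormedAddCommGroup Z] [NormedSpace ℝ Z] {G : Y → Z}
    (h : CB.{v, w} D m G) : ∃ C, ∀ y ∈ D, ‖G y‖ ≤ C := by
  cases m with
  | zero => exact h
  | succ m => exact h.1

theorem CB.mono {m : ℕ} : ∀ {m' : ℕ} {Z : Type (max v w)} [NormedAddCommGroup Z]
    [NormedSpace ℝ Z] {G : Y → Z}, CB.{v, w} D m G → m' ≤ m → CB.{v, w} D m' G := by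
  induction m with
  | zero =>
    intro m' Z _ _ G h hm
    obtain rfl : m' = 0 := by omega
    exact h
  | succ m ih =>
    intro m' Z _ _ G h hm
    cases m' with
    | zero => exact h.1
    | succ m' =>
      obtain ⟨h1, G', h2, h3⟩ := h
      exact ⟨h1, G', h2, ih h3 (by omega)⟩

theorem CB.monoD {m : ℕ} {D' : Set Y} (hD : D' ⊆ D) : ∀ {Z : Type (max v w)}
    [NormedAddCommGroup Z]
    [NormedSpace ℝ Z] {G : Y → Z}, CB.{v, w} D m G → CB.{v, w} D' m G := by
  induction m with
  | zero =>
    intro Z _ _ G ⟨C, h⟩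
    exact ⟨C, fun y hy => h y (hD hy)⟩
  | succ m ih =>
    intro Z _ _ G h
    obtain ⟨⟨C, h1⟩, G', h2, h3⟩ := h
    exact ⟨⟨C, fun y hy => h1 y (hD hy)⟩, G', fun y hy => (h2 y (hD hy)).mono hD, ih h3⟩

theorem CB_of_contDiffOn {S K : Set Y} (hS : UniqueDiffOn ℝ S) (hK : IsCompact K) (hKS : K ⊆ S)
    {m : ℕ} : ∀ {Z : Type (max v w)} [NormedAddCommGroup Z]
    [NormedSpace ℝ Z] {G : Y → Z}, ContDiffOn ℝ m G S →
    ∃ U, IsOpen U ∧ K ⊆ U ∧ CB.{v, w} (S ∩ U) m G := by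
  have h0 : ∀ {Z : Type (max v w)} [NormedAddCommGroup Z]
    [NormedSpace ℝ Z] {G : Y → Z}, ContinuousOn G S →
    ∃ U, IsOpen U ∧ K ⊆ U ∧ ∃ C, ∀ y ∈ S ∩ U, ‖G y‖ ≤ C := by
    intro Z _ _ G hG
    obtain ⟨C, hC⟩ := hK.exists_bound_of_continuousOn (hG.mono hKS)
    have hn : ContinuousOn (fun y => ‖G y‖) S := hG.norm
    obtain ⟨U, hU, hUS⟩ := (continuousOn_iff'.1 hn) (Set.Iio (C + 1)) isOpen_Iio
    refine ⟨U, hU, ?_, C + 1, ?_⟩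
    · intro y hy
      have : y ∈ (fun y => ‖G y‖) ⁻¹' Set.Iio (C + 1) ∩ S :=
        ⟨by have := hC y hy; simp only [Set.mem_preimage, Set.mem_Iio]; linarith, hKS hy⟩
      rw [hUS] at this
      exact this.1
    · intro y hy
      have : y ∈ U ∩ S := ⟨hy.2, hy.1⟩
      rw [← hUS] at this
      exact (show ‖G y‖ < C + 1 from this.1).le
  induction m with
  | zero =>
    intro Z _ _ G hG
    exact h0 hG.continuousOn
  | succ m ih =>
    intro Z _ _ G hG
    obtain ⟨U, hU, hKU, hC⟩ := h0 hG.continuousOn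
    have hG' : ContDiffOn ℝ m (fderivWithin ℝ G S) S :=
      hG.fderivWithin hS (by exact_mod_cast le_rfl)
    obtain ⟨V, hV, hKV, hCV⟩ := ih hG'
    refine ⟨U ∩ V, hU.inter hV, Set.subset_inter hKU hKV, ?_, fderivWithin ℝ G S, ?_, ?_⟩
    · obtain ⟨C, hC⟩ := hC
      exact ⟨C, fun y hy => hC y ⟨hy.1, hy.2.1⟩⟩
    · intro y hy
      refine HasFDerivWithinAt.mono (t := S) ?_ Set.inter_subset_left
      exact ((hG.differentiableOn (by simp)) y hy.1).hasFDerivWithinAt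
    · exact CB.monoD (D := S ∩ V) (fun y hy => ⟨hy.1, hy.2.2⟩) hCV

theorem seg_deriv (hD : Convex ℝ D) {Z : Type*} [NormedAddCommGroup Z] [NormedSpace ℝ Z]
    {G : Y → Z} {G' : Y → Y →L[ℝ] Z} (h : ∀ y ∈ D, HasFDerivWithinAt G (G' y) D y) {a d : Y}
    (ha : a ∈ D) (hd : a + d ∈ D) {s : ℝ} (hs : s ∈ Set.Icc (0 : ℝ) 1) :
    HasDerivWithinAt (fun s : ℝ => G (a + s • d)) (G' (a + s • d) d) (Set.Icc 0 1) s := by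
  have hm : Set.MapsTo (fun s : ℝ => a + s • d) (Set.Icc 0 1) D := by
    intro t ht
    exact hD.add_smul_mem ha hd ht
  have h1 : HasDerivWithinAt (fun s : ℝ => a + s • d) d (Set.Icc 0 1) s := by
    have := ((hasDerivAt_id s).smul_const d).const_add a
    simpa using this.hasDerivWithinAt
  exact (h _ (hm hs)).comp_hasDerivWithinAt s h1 hm

theorem O_sfam {ι : Type*} {E : Type*} [NormedAddCommGroup E] [NormedSpace ℝ E]
    {k : ι → ℝ} {L : ι → ℕ} {r m : ℕ} (hk : ∀ i, 0 < k i) {d : ι → ℕ → E}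
    (h : O k L r m d) : O (ι := ι × Set.Icc (0 : ℝ) 1) (fun q => k q.1) (fun q => L q.1) r m
      (fun q n => (q.2 : ℝ) • d q.1 n) := by
  have := (h.reindex (fun q : ι × Set.Icc (0 : ℝ) 1 => q.1)).smulk (s := 0) (fun q => hk q.1)
    (fun q => (q.2 : ℝ)) 1 (by intro q; have := q.2.2; simp [abs_of_nonneg this.1, this.2])
  simpa using this

theorem O_comp (hD : Convex ℝ D) (m : ℕ) : ∀ {ι : Type} {k : ι → ℝ} {L : ι → ℕ}
    {Z : Type (max v w)} [NormedAddCommGroup Z] [NormedSpace ℝ Z] {G : Y → Z}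
    {y : ι → ℕ → Y}, (∀ i, 0 < k i) → CB.{v, w} D m G → (∀ i n, n < L i → y i n ∈ D) →
    O k L 0 m y → O k L 0 m (fun i n => G (y i n)) := by
  have h0 : ∀ {ι : Type} {k : ι → ℝ} {L : ι → ℕ}
    {Z : Type (max v w)} [NormedAddCommGroup Z] [NormedSpace ℝ Z] {G : Y → Z}
    {y : ι → ℕ → Y}, (∃ C, ∀ y ∈ D, ‖G y‖ ≤ C) → (∀ i n, n < L i → y i n ∈ D) →
    O k L 0 0 (fun i n => G (y i n)) := by
    intro ι k L Z _ _ G y ⟨C, hC⟩ hy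
    exact O_zero_iff.2 ⟨C, fun i n hn => by simpa using hC _ (hy i n hn)⟩
  induction m with
  | zero => intro ι k L Z _ _ G y hk hG hy hO; exact h0 hG hy
  | succ m ih =>
    intro ι k L Z _ _ G y hk hG hy hO
    rw [O_succ_iff hk]
    refine ⟨h0 hG.1 hy, ?_⟩
    obtain ⟨_, G', hG', hCB⟩ := hG
    have hO1 := hO.mono (Nat.le_succ m)
    have hOL : O k (fun i => L i - 1) 0 m y := hO1.monoL (by intro i; simp)
    have hdiff : O k (fun i => L i - 1) 0 m (fun i n => y i (n + 1) - y i n) :=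
      O.sub hk hO1.shift hOL
    have hk2 : ∀ q : ι × Set.Icc (0 : ℝ) 1, 0 < k q.1 := fun q => hk q.1
    have hmem : ∀ i n, n < L i - 1 → y i n ∈ D ∧ y i n + (y i (n + 1) - y i n) ∈ D := by
      intro i n hn
      refine ⟨hy i n (by omega), ?_⟩
      rw [add_sub_cancel]; exact hy i (n + 1) (by omega)
    have hys := (hOL.reindex (fun q : ι × Set.Icc (0 : ℝ) 1 => q.1)).add (O_sfam hk hdiff)
    have hGs := ih (G := G') hk2 hCB (fun q n hn => hD.add_smul_mem (hmem q.1 n hn).1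
      (hmem q.1 n hn).2 q.2.2) hys
    have hDy := ((O_succ_iff hk).1 hO).2.reindex (fun q : ι × Set.Icc (0 : ℝ) 1 => q.1)
    have hfin := O.app hk2 hGs hDy
    have := O_mvt (k := k) (L := fun i => L i - 1) (r := 0) (m := m)
      (fun i s n => (k i)⁻¹ • G (y i n + s • (y i (n + 1) - y i n)))
      (fun i s n => (k i)⁻¹ • G' (y i n + s • (y i (n + 1) - y i n)) (y i (n + 1) - y i n))
      (fun i n hn s hs => (seg_deriv hD hG' (hmem i n hn).1 (hmem i n hn).2 hs).const_smul _)
      (hfin.congr (fun q n _ => by simp [dl]))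
    refine this.congr (fun i n _ => ?_)
    simp [dl, smul_sub]

theorem O_diff (hD : Convex ℝ D) (m r : ℕ) {ι : Type} {k : ι → ℝ} {L : ι → ℕ}
    {Z : Type (max v w)} [NormedAddCommGroup Z] [NormedSpace ℝ Z] {G : Y → Z} {K : ℝ}
    {a d : ι → ℕ → Y} (hk : ∀ i, 0 < k i) (hK : ∀ i, k i ≤ K) (hG : CB.{v, w} D (m + 1) G)
    (ha : ∀ i n, n < L i → a i n ∈ D) (had : ∀ i n, n < L i → a i n + d i n ∈ D)
    (hOa : O k L 0 m a) (hOd : O k L r m d) :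
    O k L r m (fun i n => G (a i n + d i n) - G (a i n)) := by
  obtain ⟨_, G', hG', hCB⟩ := hG
  have hk2 : ∀ q : ι × Set.Icc (0 : ℝ) 1, 0 < k q.1 := fun q => hk q.1
  have hys := (hOa.reindex (fun q : ι × Set.Icc (0 : ℝ) 1 => q.1)).add
    (O_sfam hk (O.weak hk hK hOd (Nat.zero_le r)))
  have hGs := O_comp hD m (G := G') hk2 hCB (fun q n hn => hD.add_smul_mem (ha q.1 n hn)
      (had q.1 n hn) q.2.2) hys
  have hfin := O.app hk2 hGs (hOd.reindex (fun q : ι × Set.Icc (0 : ℝ) 1 => q.1))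
  rw [Nat.zero_add] at hfin
  have := O_mvt (k := k) (L := L) (r := r) (m := m)
      (fun i s n => G (a i n + s • d i n))
      (fun i s n => G' (a i n + s • d i n) (d i n))
      (fun i n hn s hs => (seg_deriv hD hG' (ha i n hn) (had i n hn) hs)) hfin
  simpa using this

theorem O_quad (hD : Convex ℝ D) (m r : ℕ) {ι : Type} {k : ι → ℝ} {L : ι → ℕ}
    {Z : Type (max v w)} [NormedAddCommGroup Z] [NormedSpace ℝ Z] {G : Y → Z} {K : ℝ}
    {G' : Y → Y →L[ℝ] Z}
    {a d : ι → ℕ → Y} (hk : ∀ i, 0 < k i) (hK : ∀ i, k i ≤ K)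
    (hG' : ∀ y ∈ D, HasFDerivWithinAt G (G' y) D y) (hCB : CB.{v, w} D (m + 1) G')
    (ha : ∀ i n, n < L i → a i n ∈ D) (had : ∀ i n, n < L i → a i n + d i n ∈ D)
    (hOa : O k L 0 m a) (hOd : O k L r m d) :
    O k L (r + r) m (fun i n => G (a i n + d i n) - G (a i n) - G' (a i n) (d i n)) := by
  have hk2 : ∀ q : ι × Set.Icc (0 : ℝ) 1, 0 < k q.1 := fun q => hk q.1
  have hK2 : ∀ q : ι × Set.Icc (0 : ℝ) 1, k q.1 ≤ K := fun q => hK q.1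
  have hGs := O_diff hD m r (G := G') hk2 hK2 hCB (fun q n hn => ha q.1 n hn)
    (fun q n hn => hD.add_smul_mem (ha q.1 n hn)
      (had q.1 n hn) q.2.2) (hOa.reindex (fun q : ι × Set.Icc (0 : ℝ) 1 => q.1)) (O_sfam hk hOd)
  have hfin := O.app hk2 hGs (hOd.reindex (fun q : ι × Set.Icc (0 : ℝ) 1 => q.1))
  have := O_mvt (k := k) (L := L) (r := r + r) (m := m)
      (fun i s n => G (a i n + s • d i n) - s • G' (a i n) (d i n))
      (fun i s n => (G' (a i n + s • d i n) - G' (a i n)) (d i n))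
      (fun i n hn s hs => by
        have h1 := seg_deriv hD hG' (ha i n hn) (had i n hn) hs
        have h2 := ((hasDerivAt_id s).smul_const (G' (a i n) (d i n))).hasDerivWithinAt
          (s := Set.Icc 0 1)
        have := h1.fun_sub h2
        simpa using this) hfin
  refine this.congr (fun i n _ => ?_)
  simp only [one_smul, zero_smul, add_zero, sub_zero]
  abel

end comp

theorem O_taylor {T : ℝ} (m r : ℕ) : ∀ {ι : Type} {k : ι → ℝ} {L : ι → ℕ}
    {Z : Type w} [NormedAddCommGroup Z] [NormedSpace ℝ Z] (f : ℕ → ℝ → Z) (c : ι → ℝ) {K : ℝ},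
    (∀ i, 0 < k i) → (∀ i, k i ≤ K) → (∀ i n, n < L i → (n : ℝ) * k i + k i ≤ T) →
    (∀ j < r, ∀ t ∈ Set.Icc 0 T, HasDerivWithinAt (f j) (f (j + 1) t) (Set.Icc 0 T) t) →
    CB.{0, w} (Set.Icc 0 T) m (f r) → (∀ i, c i ∈ Set.Icc (0 : ℝ) 1) →
    O k L r m (fun i n => f 0 ((n : ℝ) * k i + c i * k i) -
      ∑ j ∈ Finset.range r, ((c i * k i) ^ j / (j.factorial : ℝ)) • f j ((n : ℝ) * k i)) := by
  induction r with
  | zero =>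
    intro ι k L Z _ _ f c K hk hK ht hf hCB hc
    simp only [Finset.range_zero, Finset.sum_empty, sub_zero]
    refine O_comp (convex_Icc 0 T) m hk hCB ?_ ?_
    · intro i n hn
      have h1 := ht i n hn
      have h2 := (hk i).le
      have h3 := hc i
      have h4 : (0 : ℝ) ≤ n := Nat.cast_nonneg _
      constructor
      · have := h3.1; positivity
      · nlinarith [h3.2]
    · refine O.add (O_time hk (T := T) ?_ m) (O_const (fun i => c i * k i) K ?_)
      · intro i n hn; linarith [ht i n hn, hk i]
      · intro i
        rw [Real.norm_of_nonneg (mul_nonneg (hc i).1 (hk i).le)]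
        simp only [pow_zero, mul_one]
        nlinarith [(hc i).2, hk i, hK i]
  | succ r ih =>
    intro ι k L Z _ _ f c K hk hK ht hf hCB hc
    have hsc : ∀ q : ι × Set.Icc (0 : ℝ) 1, (q.2 : ℝ) * c q.1 ∈ Set.Icc (0 : ℝ) 1 := by
      intro q
      exact ⟨mul_nonneg q.2.2.1 (hc q.1).1, mul_le_one₀ q.2.2.2 (hc q.1).1 (hc q.1).2⟩
    have h1 := ih (ι := ι × Set.Icc (0 : ℝ) 1) (k := fun q => k q.1) (L := fun q => L q.1)
      (fun j => f (j + 1)) (fun q => (q.2 : ℝ) * c q.1) (fun q => hk q.1) (fun q => hK q.1)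
      (fun q n hn => ht q.1 n hn) (fun j hj => hf (j + 1) (by omega)) hCB hsc
    have h2 := h1.smulk (s := 1) (fun q => hk q.1) (fun q => c q.1 * k q.1) 1 (by
      intro q
      rw [abs_of_nonneg (mul_nonneg (hc q.1).1 (hk q.1).le)]
      nlinarith [(hc q.1).2, hk q.1])
    rw [Nat.add_comm 1 r] at h2
    have := O_mvt (k := k) (L := L) (r := r + 1) (m := m)
      (fun i s n => f 0 ((n : ℝ) * k i + (s * c i) * k i) -
        ∑ j ∈ Finset.range (r + 1), (((s * c i) * k i) ^ j / (j.factorial : ℝ)) •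
          f j ((n : ℝ) * k i))
      (fun i s n => (c i * k i) • (f 1 ((n : ℝ) * k i + (s * c i) * k i) -
        ∑ j ∈ Finset.range r, (((s * c i) * k i) ^ j / (j.factorial : ℝ)) •
          f (j + 1) ((n : ℝ) * k i))) ?_ h2
    · refine this.congr (fun i n hn => ?_)
      simp only [one_mul, zero_mul, add_zero]
      rw [Finset.sum_range_succ' (fun j => ((0 : ℝ) ^ j / (j.factorial : ℝ)) • f j ((n : ℝ) * k i))]
      simp
    · intro i n hn s hs
      have hmaps : Set.MapsTo (fun s : ℝ => (n : ℝ) * k i + (s * c i) * k i) (Set.Icc 0 1)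
          (Set.Icc 0 T) := by
        intro t htt
        have h1 := ht i n hn
        have h2 := (hk i).le
        have h3 := hsc (i, ⟨t, htt⟩)
        have h4 : (0 : ℝ) ≤ n := Nat.cast_nonneg _
        simp only at h3
        constructor
        · have := h3.1; positivity
        · nlinarith [h3.2]
      have hin : HasDerivAt (fun s : ℝ => (s * c i) * k i) (c i * k i) s := by
        have := ((hasDerivAt_id s).mul_const (c i)).mul_const (k i)
        simpa using this
      have hA := (hf 0 (by omega) _ (hmaps hs)).scomp s
        (hin.const_add ((n : ℝ) * k i)).hasDerivWithinAt hmaps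
      have hB : HasDerivAt (fun s : ℝ => ∑ j ∈ Finset.range (r + 1),
          (((s * c i) * k i) ^ j / (j.factorial : ℝ)) • f j ((n : ℝ) * k i))
          (∑ j ∈ Finset.range r, ((c i * k i) * (((s * c i) * k i) ^ j / (j.factorial : ℝ))) •
          f (j + 1) ((n : ℝ) * k i)) s := by
        have hs' : (fun s : ℝ => ∑ j ∈ Finset.range (r + 1),
          (((s * c i) * k i) ^ j / (j.factorial : ℝ)) • f j ((n : ℝ) * k i)) = fun s : ℝ =>
          ∑ j ∈ Finset.range r,
          (((s * c i) * k i) ^ (j + 1) / ((j + 1).factorial : ℝ)) • f (j + 1) ((n : ℝ) * k i)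
           + f 0 ((n : ℝ) * k i) := by
          funext s
          rw [Finset.sum_range_succ']
          simp
        rw [hs']
        refine HasDerivAt.add_const _ (HasDerivAt.fun_sum (fun j _ => ?_))
        refine HasDerivAt.smul_const ?_ _
        have := (hin.fun_pow (j + 1)).div_const ((j + 1).factorial : ℝ)
        refine this.congr_deriv ?_
        have : (j.factorial : ℝ) ≠ 0 := by positivity
        have h5 : (j : ℝ) + 1 ≠ 0 := by positivity
        rw [Nat.factorial_succ, Nat.add_sub_cancel]
        push_cast
        field_simp
      have := hA.fun_sub hB.hasDerivWithinAt
      refine this.congr_deriv ?_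
      rw [smul_sub, Finset.smul_sum]
      simp [smul_smul]

end DC

namespace DC

section trunc

variable {E : Type w} [NormedAddCommGroup E] [NormedSpace ℝ E]

/-- the domain -/
def dom (E : Type w) [NormedAddCommGroup E] [NormedSpace ℝ E] (T δ : ℝ) : Set (ℝ × E) :=
  Set.Icc 0 T ×ˢ Metric.ball 0 δ

theorem dom_convex (T δ : ℝ) : Convex ℝ (dom E T δ) := (convex_Icc 0 T).prod (convex_ball 0 δ)

structure Ctx (T δ M : ℝ) (q : ℕ) (f : ℕ → ℝ → E) (G : ℝ × E → E)
    (G' : ℝ × E → (ℝ × E) →L[ℝ] E) : Prop where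
  hδ : 0 < δ
  hder : ∀ j < 5, ∀ t ∈ Set.Icc 0 T, HasDerivWithinAt (f j) (f (j + 1) t) (Set.Icc 0 T) t
  hf : ∀ j ≤ 5, CB.{0, w} (Set.Icc 0 T) q (f j)
  hG' : ∀ y ∈ dom E T δ, HasFDerivWithinAt G (G' y) (dom E T δ) y
  hCB : CB.{w, w} (dom E T δ) (q + 1) G'
  hM : ∀ y ∈ dom E T δ, ‖G y‖ ≤ M
  hG1 : ∀ t ∈ Set.Icc 0 T, G (t, 0) = f 1 t

noncomputable def e2 (f : ℕ → ℝ → E) (t k : ℝ) : E :=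
  f 0 t + (k / 2) • f 1 t - f 0 (t + k / 2)
noncomputable def K2 (f : ℕ → ℝ → E) (G : ℝ × E → E) (t k : ℝ) : E := G (t + k / 2, e2 f t k)
noncomputable def e3 (f : ℕ → ℝ → E) (G : ℝ × E → E) (t k : ℝ) : E :=
  f 0 t + (k / 2) • K2 f G t k - f 0 (t + k / 2)
noncomputable def K3 (f : ℕ → ℝ → E) (G : ℝ × E → E) (t k : ℝ) : E := G (t + k / 2, e3 f G t k)
noncomputable def e4 (f : ℕ → ℝ → E) (G : ℝ × E → E) (t k : ℝ) : E :=
  f 0 t + k • K3 f G t k - f 0 (t + k)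
noncomputable def K4 (f : ℕ → ℝ → E) (G : ℝ × E → E) (t k : ℝ) : E := G (t + k, e4 f G t k)

variable {T δ M : ℝ} {q : ℕ} {f : ℕ → ℝ → E} {G : ℝ × E → E}
    {G' : ℝ × E → (ℝ × E) →L[ℝ] E}

theorem mem_dom {t : ℝ} {e : E} (ht : 0 ≤ t) (ht' : t ≤ T) (he : ‖e‖ < δ) :
    (t, e) ∈ dom E T δ := by
  refine ⟨⟨ht, ht'⟩, ?_⟩
  simpa using he

theorem Ctx.small (H : Ctx T δ M q f G G') {K t k : ℝ} (hk : 0 < k) (hK : k ≤ K)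
    (hKM : 4 * K * M < δ) (ht : 0 ≤ t) (htk : t + k ≤ T) :
    ‖e2 f t k‖ < δ / 2 ∧ ‖e3 f G t k‖ < δ / 2 ∧ ‖e4 f G t k‖ < δ / 2 := by
  have hδ := H.hδ
  have hf1 : ∀ t ∈ Set.Icc 0 T, ‖f 1 t‖ ≤ M := by
    intro t ht
    rw [← H.hG1 t ht]
    exact H.hM _ (mem_dom ht.1 ht.2 (by simpa using H.hδ))
  have hM0 : 0 ≤ M := (norm_nonneg _).trans (hf1 t ⟨ht, by linarith⟩)
  have hlip : ∀ c, 0 ≤ c → c ≤ k → ‖f 0 (t + c) - f 0 t‖ ≤ M * k := by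
    intro c hc hck
    have := (convex_Icc 0 T).norm_image_sub_le_of_norm_hasDerivWithin_le
      (fun t ht => H.hder 0 (by omega) t ht) hf1 (x := t) (y := t + c)
      ⟨ht, by linarith⟩ ⟨by linarith, by linarith⟩
    refine this.trans ?_
    rw [add_sub_cancel_left, Real.norm_of_nonneg hc]
    exact mul_le_mul_of_nonneg_left hck hM0
  have gen : ∀ c b (v : E), 0 ≤ c → c ≤ k → 0 ≤ b → b ≤ k → ‖v‖ ≤ M →
      ‖f 0 t + b • v - f 0 (t + c)‖ < δ / 2 := by
    intro c b v hc hck hb hbk hv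
    have h1 := hlip c hc hck
    have h2 : ‖b • v‖ ≤ M * k := by
      rw [norm_smul, Real.norm_of_nonneg hb]
      nlinarith [norm_nonneg v]
    have h3 : f 0 t + b • v - f 0 (t + c) = b • v - (f 0 (t + c) - f 0 t) := by abel
    rw [h3]
    have := norm_sub_le (b • v) (f 0 (t + c) - f 0 t)
    nlinarith
  have h2 : ‖e2 f t k‖ < δ / 2 := gen _ _ _ (by linarith) (by linarith) (by linarith)
    (by linarith) (hf1 t ⟨ht, by linarith⟩)
  have h3 : ‖e3 f G t k‖ < δ / 2 := gen _ _ _ (by linarith) (by linarith) (by linarith)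
    (by linarith) (H.hM _ (mem_dom (by linarith) (by linarith) (by linarith)))
  have h4 : ‖e4 f G t k‖ < δ / 2 := gen _ _ _ (by linarith) (by linarith) (by linarith)
    (by linarith) (H.hM _ (mem_dom (by linarith) (by linarith) (by linarith)))
  exact ⟨h2, h3, h4⟩

theorem O.kinv {ι : Type} {k : ι → ℝ} {L : ι → ℕ} {r m : ℕ} {y : ι → ℕ → E}
    (hk : ∀ i, 0 < k i) (hy : O k L (r + 1) m y) :
    O k L r m (fun i n => (k i)⁻¹ • y i n) := by
  obtain ⟨C, hC⟩ := hy
  refine ⟨C, fun i l hl n hn => ?_⟩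
  rw [dl_smul, norm_smul, Real.norm_of_nonneg (inv_nonneg.2 (hk i).le)]
  have := hC i l hl n hn
  rw [inv_mul_le_iff₀ (hk i)]
  refine this.trans (le_of_eq ?_)
  ring

theorem Ctx.trunc (H : Ctx T δ M q f G G') {ι : Type} {k : ι → ℝ} {L : ι → ℕ} {K : ℝ}
    (hk : ∀ i, 0 < k i) (hK : ∀ i, k i ≤ K) (hKM : 4 * K * M < δ)
    (ht : ∀ i n, n < L i → (n : ℝ) * k i + k i ≤ T) :
    O k L 0 q (fun i n => e2 f (n * k i) (k i)) ∧
    O k L 0 q (fun i n => e3 f G (n * k i) (k i)) ∧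
    O k L 0 q (fun i n => e4 f G (n * k i) (k i)) ∧
    O k L 4 q (fun i n => (1 / 6 : ℝ) • (f 1 (n * k i) + (2 : ℝ) • K2 f G (n * k i) (k i)
      + (2 : ℝ) • K3 f G (n * k i) (k i) + K4 f G (n * k i) (k i))
      - (k i)⁻¹ • (f 0 (n * k i + k i) - f 0 (n * k i))) := by
  have htn : ∀ i n, n < L i → 0 ≤ (n : ℝ) * k i := fun i n _ =>
    mul_nonneg (Nat.cast_nonneg _) (hk i).le
  have hsm := fun i n hn => H.small (hk i) (hK i) hKM (htn i n hn) (ht i n hn)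
  have tay : ∀ r j0, j0 + r ≤ 5 → ∀ c ∈ Set.Icc (0 : ℝ) 1,
      O k L r q (fun i n => f j0 ((n : ℝ) * k i + c * k i) -
      ∑ j ∈ Finset.range r, ((c * k i) ^ j / (j.factorial : ℝ)) • f (j0 + j) ((n : ℝ) * k i)) := by
    intro r j0 hr c hc
    exact O_taylor q r (fun j => f (j0 + j)) (fun _ => c) hk hK ht
      (fun j hj t ht => H.hder (j0 + j) (by omega) t ht) (H.hf (j0 + r) hr) (fun _ => hc)
  have Fj : ∀ j ≤ 5, O k L 0 q (fun i n => f j ((n : ℝ) * k i)) := by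
    intro j hj
    simpa using tay 0 j hj 0 (by simp)
  have hh : (1 / 2 : ℝ) ∈ Set.Icc (0 : ℝ) 1 := by norm_num
  have h11 : (1 : ℝ) ∈ Set.Icc (0 : ℝ) 1 := by norm_num
  have hhalf : ∀ x : ℝ, 1 / 2 * x = x / 2 := fun x => by ring
  have R0h : O k L 4 q (fun i n => f 0 (n * k i + k i / 2) - f 0 (n * k i) -
      (k i / 2) • f 1 (n * k i) - (k i ^ 2 / 8) • f 2 (n * k i) -
      (k i ^ 3 / 48) • f 3 (n * k i)) := by
    refine (tay 4 0 (by omega) _ hh).congr (fun i n _ => ?_)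
    simp only [Finset.sum_range_succ, Finset.sum_range_zero, Nat.factorial, hhalf]
    push_cast
    module
  have R1h3 : O k L 3 q (fun i n => f 1 (n * k i + k i / 2) - f 1 (n * k i) -
      (k i / 2) • f 2 (n * k i) - (k i ^ 2 / 8) • f 3 (n * k i)) := by
    refine (tay 3 1 (by omega) _ hh).congr (fun i n _ => ?_)
    simp only [Finset.sum_range_succ, Finset.sum_range_zero, Nat.factorial, hhalf]
    push_cast
    module
  have R1h4 : O k L 4 q (fun i n => f 1 (n * k i + k i / 2) - f 1 (n * k i) -
      (k i / 2) • f 2 (n * k i) - (k i ^ 2 / 8) • f 3 (n * k i) -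
      (k i ^ 3 / 48) • f 4 (n * k i)) := by
    refine (tay 4 1 (by omega) _ hh).congr (fun i n _ => ?_)
    simp only [Finset.sum_range_succ, Finset.sum_range_zero, Nat.factorial, hhalf]
    push_cast
    module
  have R114 : O k L 4 q (fun i n => f 1 (n * k i + k i) - f 1 (n * k i) -
      (k i) • f 2 (n * k i) - (k i ^ 2 / 2) • f 3 (n * k i) -
      (k i ^ 3 / 6) • f 4 (n * k i)) := by
    refine (tay 4 1 (by omega) _ h11).congr (fun i n _ => ?_)
    simp only [Finset.sum_range_succ, Finset.sum_range_zero, Nat.factorial, one_mul]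
    push_cast
    module
  have R014 : O k L 4 q (fun i n => f 0 (n * k i + k i) - f 0 (n * k i) -
      (k i) • f 1 (n * k i) - (k i ^ 2 / 2) • f 2 (n * k i) -
      (k i ^ 3 / 6) • f 3 (n * k i)) := by
    refine (tay 4 0 (by omega) _ h11).congr (fun i n _ => ?_)
    simp only [Finset.sum_range_succ, Finset.sum_range_zero, Nat.factorial, one_mul]
    push_cast
    module
  have R015 : O k L 5 q (fun i n => f 0 (n * k i + k i) - f 0 (n * k i) -
      (k i) • f 1 (n * k i) - (k i ^ 2 / 2) • f 2 (n * k i) -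
      (k i ^ 3 / 6) • f 3 (n * k i) - (k i ^ 4 / 24) • f 4 (n * k i)) := by
    refine (tay 5 0 (by omega) _ h11).congr (fun i n _ => ?_)
    simp only [Finset.sum_range_succ, Finset.sum_range_zero, Nat.factorial, one_mul]
    push_cast
    module
  have wk : ∀ {r r' : ℕ} {y : ι → ℕ → E}, O k L r q y → r' ≤ r → O k L r' q y :=
    fun h h' => O.weak hk hK h h'
  -- base points
  have hbase : ∀ c ∈ Set.Icc (0 : ℝ) 1,
      O k L 0 q (fun i n => ((n * k i + c * k i, (0 : E)) : ℝ × E)) := by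
    intro c hc
    refine O.prodMk ?_ (O_const (fun _ => (0 : E)) 0 (by simp))
    refine O.add (O_time hk (T := T) ?_ q) (O_const (fun i => c * k i) K ?_)
    · intro i n hn; linarith [ht i n hn, hk i]
    · intro i
      rw [Real.norm_of_nonneg (mul_nonneg hc.1 (hk i).le)]
      simp only [pow_zero, mul_one]
      nlinarith [hc.2, hk i, hK i]
  have hbh : O k L 0 q (fun i n => ((n * k i + k i / 2, (0 : E)) : ℝ × E)) := by
    simpa only [hhalf] using hbase _ hh
  have hb1 : O k L 0 q (fun i n => ((n * k i + k i, (0 : E)) : ℝ × E)) := by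
    simpa only [one_mul] using hbase _ h11
  have hbhm : ∀ i n, n < L i → ((n * k i + k i / 2, (0 : E)) : ℝ × E) ∈ dom E T δ := by
    intro i n hn
    have := ht i n hn; have := htn i n hn; have := hk i
    exact mem_dom (by linarith) (by linarith) (by simpa using H.hδ)
  have hb1m : ∀ i n, n < L i → ((n * k i + k i, (0 : E)) : ℝ × E) ∈ dom E T δ := by
    intro i n hn
    have := ht i n hn; have := htn i n hn; have := hk i
    exact mem_dom (by linarith) (by linarith) (by simpa using H.hδ)
  set Jh : ι → ℕ → E →L[ℝ] E := fun i n =>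
    (G' (n * k i + k i / 2, 0)).comp (ContinuousLinearMap.inr ℝ ℝ E) with hJh
  set J1 : ι → ℕ → E →L[ℝ] E := fun i n =>
    (G' (n * k i + k i, 0)).comp (ContinuousLinearMap.inr ℝ ℝ E) with hJ1
  have OJh : O k L 0 q Jh := (O_comp (dom_convex T δ) q hk (H.hCB.mono (Nat.le_succ q)) hbhm
    hbh).map ((ContinuousLinearMap.compL ℝ E (ℝ × E) E).flip (ContinuousLinearMap.inr ℝ ℝ E))
  have OJ1 : O k L 0 q J1 := (O_comp (dom_convex T δ) q hk (H.hCB.mono (Nat.le_succ q)) hb1m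
    hb1).map ((ContinuousLinearMap.compL ℝ E (ℝ × E) E).flip (ContinuousLinearMap.inr ℝ ℝ E))
  have ODJ : O k L 1 q (fun i n => J1 i n - Jh i n) := by
    have hd : O k L 1 q (fun i _ => ((k i / 2, (0 : E)) : ℝ × E)) := by
      refine O_const (fun i => ((k i / 2, (0 : E)) : ℝ × E)) 1 (fun i => ?_)
      have := hk i
      rw [Prod.norm_def]
      simp only [norm_zero, pow_one, one_mul]
      refine max_le ?_ this.le
      rw [Real.norm_of_nonneg (by linarith)]
      linarith
    have hadd : ∀ i (n : ℕ), ((n * k i + k i / 2, (0 : E)) : ℝ × E) + (k i / 2, (0 : E)) =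
        (n * k i + k i, (0 : E)) := by
      intro i n
      ext
      · simp only [Prod.fst_add]; ring
      · simp
    have := (O_diff (dom_convex T δ) q 1 hk hK H.hCB hbhm
      (fun i n hn => by rw [hadd]; exact hb1m i n hn) hbh hd).map
      ((ContinuousLinearMap.compL ℝ E (ℝ × E) E).flip (ContinuousLinearMap.inr ℝ ℝ E))
    refine this.congr (fun i n _ => ?_)
    rw [hadd]
    rfl
  -- quadratic expansion
  have quadh : ∀ e : ι → ℕ → E, O k L 2 q e → (∀ i n, n < L i → ‖e i n‖ < δ / 2) →
      O k L 4 q (fun i n => G (n * k i + k i / 2, e i n) - f 1 (n * k i + k i / 2)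
        - Jh i n (e i n)) := by
    intro e he hes
    have hadd : ∀ i (n : ℕ), ((n * k i + k i / 2, (0 : E)) : ℝ × E) + ((0 : ℝ), e i n) =
        (n * k i + k i / 2, e i n) := by
      intro i n; simp
    have := O_quad (dom_convex T δ) q 2 hk hK H.hG' H.hCB hbhm
      (d := fun i n => ((0 : ℝ), e i n)) (fun i n hn => by
        rw [hadd]
        exact mem_dom (hbhm i n hn).1.1 (hbhm i n hn).1.2 (by linarith [hes i n hn, H.hδ]))
      hbh (he.map (ContinuousLinearMap.inr ℝ ℝ E))
    refine this.congr (fun i n hn => ?_)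
    rw [hadd, H.hG1 _ (hbhm i n hn).1]
    rfl
  have quad1 : ∀ e : ι → ℕ → E, O k L 2 q e → (∀ i n, n < L i → ‖e i n‖ < δ / 2) →
      O k L 4 q (fun i n => G (n * k i + k i, e i n) - f 1 (n * k i + k i)
        - J1 i n (e i n)) := by
    intro e he hes
    have hadd : ∀ i (n : ℕ), ((n * k i + k i, (0 : E)) : ℝ × E) + ((0 : ℝ), e i n) =
        (n * k i + k i, e i n) := by
      intro i n; simp
    have := O_quad (dom_convex T δ) q 2 hk hK H.hG' H.hCB hb1m
      (d := fun i n => ((0 : ℝ), e i n)) (fun i n hn => by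
        rw [hadd]
        exact mem_dom (hb1m i n hn).1.1 (hb1m i n hn).1.2 (by linarith [hes i n hn, H.hδ]))
      hb1 (he.map (ContinuousLinearMap.inr ℝ ℝ E))
    refine this.congr (fun i n hn => ?_)
    rw [hadd, H.hG1 _ (hb1m i n hn).1]
    rfl
  -- stage 2
  have F2 := (Fj 2 (by omega)).kpow hk (1 / 8) 2
  have F3 := (Fj 3 (by omega)).kpow hk (1 / 48) 3
  have E23' : O k L 3 q (fun i n => e2 f (n * k i) (k i) + (k i ^ 2 / 8) • f 2 (n * k i)) := by
    refine (O.add (wk (R0h.smul hk (-1)) (by omega : 3 ≤ 4)) (F3.smul hk (-1))).congr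
      (fun i n _ => ?_)
    simp only [e2]; module
  have E2 : O k L 2 q (fun i n => e2 f (n * k i) (k i)) := by
    refine (O.add (wk E23' (by omega : 2 ≤ 3)) (F2.smul hk (-1))).congr (fun i n _ => ?_)
    module
  have Q2 : O k L 4 q (fun i n => K2 f G (n * k i) (k i) - f 1 (n * k i + k i / 2)
        - Jh i n (e2 f (n * k i) (k i))) := quadh _ E2 (fun i n hn => (hsm i n hn).1)
  have JF2 : O k L 0 q (fun i n => Jh i n (f 2 (n * k i))) := by
    simpa using O.app hk OJh (Fj 2 (by omega))
  have W : O k L 3 q (fun i n => (k i ^ 3 / 48) • f 3 (n * k i) -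
      (k i ^ 3 / 16) • Jh i n (f 2 (n * k i))) := by
    refine (F3.add (JF2.kpow hk (-1 / 16) 3)).congr (fun i n _ => ?_)
    module
  have JE2 : O k L 3 q (fun i n => Jh i n (e2 f (n * k i) (k i) + (k i ^ 2 / 8) • f 2 (n * k i)))
      := by simpa using O.app hk OJh E23'
  -- stage 3
  have S23 : O k L 4 q (fun i n => e2 f (n * k i) (k i) + e3 f G (n * k i) (k i) -
      ((k i ^ 3 / 48) • f 3 (n * k i) - (k i ^ 3 / 16) • Jh i n (f 2 (n * k i)))) := by
    refine (O.add (O.add (wk (Q2.kpow hk (1 / 2) 1) (by omega : 4 ≤ 5)) (JE2.kpow hk (1 / 2) 1))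
      (O.add (R1h3.kpow hk (1 / 2) 1) (R0h.smul hk (-2)))).congr (fun i n _ => ?_)
    simp only [map_add, map_smul]
    generalize Jh i n (e2 f (n * k i) (k i)) = a
    generalize Jh i n (f 2 (n * k i)) = b
    simp only [e2, e3]
    module
  have E33' : O k L 3 q (fun i n => e3 f G (n * k i) (k i) - (k i ^ 2 / 8) • f 2 (n * k i)) := by
    refine (O.add (O.add (wk S23 (by omega : 3 ≤ 4)) W) (E23'.smul hk (-1))).congr
      (fun i n _ => ?_)
    module
  have E3 : O k L 2 q (fun i n => e3 f G (n * k i) (k i)) := by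
    refine (O.add (wk E33' (by omega : 2 ≤ 3)) F2).congr (fun i n _ => ?_)
    module
  have Q3 : O k L 4 q (fun i n => K3 f G (n * k i) (k i) - f 1 (n * k i + k i / 2)
        - Jh i n (e3 f G (n * k i) (k i))) := quadh _ E3 (fun i n hn => (hsm i n hn).2.1)
  have JE3 : O k L 3 q (fun i n => Jh i n (e3 f G (n * k i) (k i) -
      (k i ^ 2 / 8) • f 2 (n * k i))) := by simpa using O.app hk OJh E33'
  -- stage 4
  have S4 : O k L 4 q (fun i n => e4 f G (n * k i) (k i) +
      (2 : ℝ) • ((k i ^ 3 / 48) • f 3 (n * k i) - (k i ^ 3 / 16) • Jh i n (f 2 (n * k i)))) := by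
    refine (O.add (O.add (wk (Q3.kpow hk 1 1) (by omega : 4 ≤ 5)) (JE3.kpow hk 1 1))
      (O.add (R1h3.kpow hk 1 1) (R014.smul hk (-1)))).congr (fun i n _ => ?_)
    simp only [map_sub, map_smul]
    generalize Jh i n (e3 f G (n * k i) (k i)) = a
    generalize Jh i n (f 2 (n * k i)) = b
    simp only [e4]
    module
  have E4 : O k L 2 q (fun i n => e4 f G (n * k i) (k i)) := by
    refine (O.add (wk S4 (by omega : 2 ≤ 4)) (wk (W.smul hk (-2)) (by omega : 2 ≤ 3))).congr
      (fun i n _ => ?_)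
    module
  have Q4 : O k L 4 q (fun i n => K4 f G (n * k i) (k i) - f 1 (n * k i + k i)
        - J1 i n (e4 f G (n * k i) (k i))) := quad1 _ E4 (fun i n hn => (hsm i n hn).2.2)
  have X1 := O.app hk OJh S23
  have X2 := O.app hk OJ1 S4
  have X3 := O.app hk ODJ W
  rw [Nat.zero_add] at X1 X2
  have SI : O k L 4 q (fun i n => (1 / 6 : ℝ) • (f 1 (n * k i) + (4 : ℝ) • f 1 (n * k i + k i / 2)
      + f 1 (n * k i + k i)) - (k i)⁻¹ • (f 0 (n * k i + k i) - f 0 (n * k i))) := by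
    have := O.kinv hk ((((R1h4.smul hk 4).add R114).kpow hk (1 / 6) 1).add (R015.smul hk (-1)))
    refine this.congr (fun i n _ => ?_)
    have hne := (hk i).ne'
    have : (k i)⁻¹ * k i = 1 := inv_mul_cancel₀ hne
    apply smul_right_injective E hne
    simp only [smul_sub, smul_smul, mul_inv_cancel₀ hne, one_smul]
    module
  refine ⟨wk E2 (Nat.zero_le _), wk E3 (Nat.zero_le _), wk E4 (Nat.zero_le _), ?_⟩
  have Y1 := ((Q2.smul hk 2).add (Q3.smul hk 2)).add Q4
  have Y2 := ((X1.smul hk 2).add X2).add (X3.smul hk (-2))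
  refine (((Y1.add Y2).smul hk (1 / 6)).add SI).congr (fun i n _ => ?_)
  simp only [map_add, map_sub, map_smul, _root_.sub_apply]
  module

end trunc

end DC

namespace DC

section step

variable {E : Type w} [NormedAddCommGroup E] [NormedSpace ℝ E]

noncomputable def κ1 (f : ℕ → ℝ → E) (G : ℝ × E → E) (t : ℝ) (e : E) : E := G (t, e) - f 1 t
noncomputable def κ2 (f : ℕ → ℝ → E) (G : ℝ × E → E) (t k : ℝ) (e : E) : E :=
  G (t + k / 2, e2 f t k + (e + (k / 2) • κ1 f G t e)) - K2 f G t k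
noncomputable def κ3 (f : ℕ → ℝ → E) (G : ℝ × E → E) (t k : ℝ) (e : E) : E :=
  G (t + k / 2, e3 f G t k + (e + (k / 2) • κ2 f G t k e)) - K3 f G t k
noncomputable def κ4 (f : ℕ → ℝ → E) (G : ℝ × E → E) (t k : ℝ) (e : E) : E :=
  G (t + k, e4 f G t k + (e + k • κ3 f G t k e)) - K4 f G t k
noncomputable def κs (f : ℕ → ℝ → E) (G : ℝ × E → E) (t k : ℝ) (e : E) : E :=
  κ1 f G t e + (2 : ℝ) • κ2 f G t k e + (2 : ℝ) • κ3 f G t k e + κ4 f G t k e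
noncomputable def tau (f : ℕ → ℝ → E) (G : ℝ × E → E) (t k : ℝ) : E :=
  (1 / 6 : ℝ) • (f 1 t + (2 : ℝ) • K2 f G t k + (2 : ℝ) • K3 f G t k + K4 f G t k)
      - k⁻¹ • (f 0 (t + k) - f 0 t)

variable {T δ M : ℝ} {q : ℕ} {f : ℕ → ℝ → E} {G : ℝ × E → E}
    {G' : ℝ × E → (ℝ × E) →L[ℝ] E}

theorem Ctx.kbound (H : Ctx T δ M q f G G') {Λ : ℝ} (hΛ0 : 0 ≤ Λ)
    (hΛ : ∀ y ∈ dom E T δ, ‖G' y‖ ≤ Λ) {K t k : ℝ} (hk : 0 < k) (hK : k ≤ K)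
    (hKM : 4 * K * M < δ) (hKΛ : K * Λ ≤ 1) (ht : 0 ≤ t) (htk : t + k ≤ T) {e : E}
    (he : ‖e‖ < δ / 6) :
    ‖e2 f t k + (e + (k / 2) • κ1 f G t e)‖ < δ ∧
    ‖e3 f G t k + (e + (k / 2) • κ2 f G t k e)‖ < δ ∧
    ‖e4 f G t k + (e + k • κ3 f G t k e)‖ < δ ∧ ‖κs f G t k e‖ ≤ 12 * Λ * ‖e‖ := by
  have hδ := H.hδ
  obtain ⟨h2, h3, h4⟩ := H.small hk hK hKM ht htk
  have hkΛ : k * Λ ≤ 1 := (mul_le_mul_of_nonneg_right hK hΛ0).trans hKΛ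
  have he0 := norm_nonneg e
  have hkΛ0 : 0 ≤ k * Λ := mul_nonneg hk.le hΛ0
  have lip : ∀ s, 0 ≤ s → s ≤ T → ∀ a d : E, ‖a‖ < δ → ‖a + d‖ < δ →
      ‖G (s, a + d) - G (s, a)‖ ≤ Λ * ‖d‖ := by
    intro s hs hsT a d ha hd
    have := (dom_convex T δ).norm_image_sub_le_of_norm_hasFDerivWithin_le H.hG' hΛ
      (mem_dom hs hsT ha) (mem_dom hs hsT hd)
    refine this.trans (le_of_eq ?_)
    simp [Prod.norm_def]
  have hd : ∀ (b c : ℝ) (v : E), 0 ≤ b → ‖v‖ ≤ c * Λ * ‖e‖ → 0 ≤ c → b ≤ k →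
      ‖e + b • v‖ ≤ (1 + (b / k) * c) * ‖e‖ := by
    intro b c v hb hv hc hbk
    refine (norm_add_le _ _).trans ?_
    rw [norm_smul, Real.norm_of_nonneg hb]
    have h1 : b * ‖v‖ ≤ b * (c * Λ * ‖e‖) := mul_le_mul_of_nonneg_left hv hb
    have h2 : b * (c * Λ * ‖e‖) = (b / k) * c * ‖e‖ * (k * Λ) := by field_simp
    have h3 : (b / k) * c * ‖e‖ * (k * Λ) ≤ (b / k) * c * ‖e‖ :=
      mul_le_of_le_one_right (by positivity) hkΛ
    linarith
  have k1 : ‖κ1 f G t e‖ ≤ 1 * Λ * ‖e‖ := by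
    have := lip t ht (by linarith) 0 e (by simpa using hδ) (by rw [zero_add]; linarith)
    rw [zero_add, H.hG1 t ⟨ht, by linarith⟩] at this
    simpa [κ1] using this
  have hkk : k / k = 1 := div_self hk.ne'
  have hkk2 : k / 2 / k = 1 / 2 := by field_simp
  have d2 : ‖e + (k / 2) • κ1 f G t e‖ ≤ (3 / 2) * ‖e‖ := by
    refine (hd _ _ _ (by linarith) k1 (by linarith) (by linarith)).trans (le_of_eq ?_)
    rw [hkk2]; ring
  have m2 : ‖e2 f t k + (e + (k / 2) • κ1 f G t e)‖ < δ :=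
    (norm_add_le _ _).trans_lt (by linarith)
  have k2 : ‖κ2 f G t k e‖ ≤ (3 / 2) * Λ * ‖e‖ := by
    refine (lip (t + k / 2) (by linarith) (by linarith) _ _ (by linarith) m2).trans ?_
    nlinarith
  have d3 : ‖e + (k / 2) • κ2 f G t k e‖ ≤ (7 / 4) * ‖e‖ := by
    refine (hd _ _ _ (by linarith) k2 (by linarith) (by linarith)).trans (le_of_eq ?_)
    rw [hkk2]; ring
  have m3 : ‖e3 f G t k + (e + (k / 2) • κ2 f G t k e)‖ < δ :=
    (norm_add_le _ _).trans_lt (by linarith)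
  have k3 : ‖κ3 f G t k e‖ ≤ (7 / 4) * Λ * ‖e‖ := by
    refine (lip (t + k / 2) (by linarith) (by linarith) _ _ (by linarith) m3).trans ?_
    nlinarith
  have d4 : ‖e + k • κ3 f G t k e‖ ≤ (11 / 4) * ‖e‖ := by
    refine (hd _ _ _ (by linarith) k3 (by linarith) (by linarith)).trans (le_of_eq ?_)
    rw [hkk]; ring
  have m4 : ‖e4 f G t k + (e + k • κ3 f G t k e)‖ < δ :=
    (norm_add_le _ _).trans_lt (by linarith)
  have k4 : ‖κ4 f G t k e‖ ≤ (11 / 4) * Λ * ‖e‖ := by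
    refine (lip (t + k) (by linarith) (by linarith) _ _ (by linarith) m4).trans ?_
    nlinarith
  refine ⟨m2, m3, m4, ?_⟩
  have := norm_add₄_le (a := κ1 f G t e) (b := (2 : ℝ) • κ2 f G t k e)
    (c := (2 : ℝ) • κ3 f G t k e) (d := κ4 f G t k e)
  rw [norm_smul, norm_smul, Real.norm_of_nonneg (by norm_num : (0 : ℝ) ≤ 2)] at this
  refine this.trans ?_
  have : 0 ≤ Λ * ‖e‖ := by positivity
  nlinarith

theorem Ctx.family (H : Ctx T δ M q f G G') {Λ : ℝ} (hΛ0 : 0 ≤ Λ)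
    (hΛ : ∀ y ∈ dom E T δ, ‖G' y‖ ≤ Λ) {ι : Type} {k : ι → ℝ} {L : ι → ℕ} {K C : ℝ}
    (hk : ∀ i, 0 < k i) (hK : ∀ i, k i ≤ K) (hKM : 4 * K * M < δ) (hKΛ : K * Λ ≤ 1)
    (ht : ∀ i n, n < L i → (n : ℝ) * k i + k i ≤ T) (hT : 0 ≤ T)
    (hC0 : 0 ≤ C) (hC : ∀ i n, n < L i → ‖tau f G (n * k i) (k i)‖ ≤ C * k i ^ 4)
    (hCK : ∀ i, T * Real.exp (2 * Λ * T) * C * k i ^ 4 < δ / 6)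
    {e : ι → ℕ → E} (he0 : ∀ i, e i 0 = 0)
    (hstep : ∀ i n, n < L i → e i (n + 1) = e i n + (k i / 6) • κs f G (n * k i) (k i) (e i n)
      + k i • tau f G (n * k i) (k i)) :
    ∀ m ≤ q + 1, O k (fun i => L i + 1) 4 m e := by
  have htn : ∀ i n, n < L i → 0 ≤ (n : ℝ) * k i := fun i n _ =>
    mul_nonneg (Nat.cast_nonneg _) (hk i).le
  have hle : ∀ i n, n ≤ L i → (n : ℝ) * k i ≤ T := by
    intro i n hn
    rcases n with _ | n
    · simpa using hT
    · have := ht i n (by omega)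
      push_cast; linarith
  -- Gronwall
  have hgr : ∀ i n, n ≤ L i →
      ‖e i n‖ ≤ (n * k i) * Real.exp (2 * Λ * (n * k i)) * (C * k i ^ 4) := by
    intro i n
    induction n with
    | zero => intro _; simp [he0]
    | succ n ih =>
      intro hn
      have ih := ih (by omega)
      have hk0 := hk i
      have hX := hle i n (by omega)
      have hX0 := htn i n (by omega)
      have hsm : ‖e i n‖ < δ / 6 := by
        refine ih.trans_lt (lt_of_le_of_lt ?_ (hCK i))
        rw [mul_assoc _ C]
        gcongr
      have hb := (H.kbound hΛ0 hΛ (hk i) (hK i) hKM hKΛ hX0 (ht i n (by omega)) hsm).2.2.2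
      rw [hstep i n (by omega)]
      have hc := hC i n (by omega)
      have h1 : ‖(k i / 6) • κs f G (n * k i) (k i) (e i n)‖ ≤ 2 * Λ * k i * ‖e i n‖ := by
        rw [norm_smul, Real.norm_of_nonneg (by positivity)]
        calc _ ≤ k i / 6 * (12 * Λ * ‖e i n‖) := by gcongr
          _ = _ := by ring
      have h2 : ‖k i • tau f G (n * k i) (k i)‖ ≤ k i * (C * k i ^ 4) := by
        rw [norm_smul, Real.norm_of_nonneg (by positivity)]
        gcongr
      have h3 := norm_add₃_le (a := e i n) (b := (k i / 6) • κs f G (n * k i) (k i) (e i n))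
        (c := k i • tau f G (n * k i) (k i))
      have h4 : 1 + 2 * Λ * k i ≤ Real.exp (2 * Λ * k i) := by
        linarith [Real.add_one_le_exp (2 * Λ * k i)]
      have h5 : Real.exp (2 * Λ * ((n + 1 : ℕ) * k i)) =
          Real.exp (2 * Λ * (n * k i)) * Real.exp (2 * Λ * k i) := by
        rw [← Real.exp_add]; congr 1; push_cast; ring
      have h6 : 1 ≤ Real.exp (2 * Λ * ((n + 1 : ℕ) * k i)) := by
        apply Real.one_le_exp; positivity
      have hD : 0 ≤ C * k i ^ 4 := by positivity
      calc _ ≤ (1 + 2 * Λ * k i) * ‖e i n‖ + k i * (C * k i ^ 4) := by linarith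
        _ ≤ Real.exp (2 * Λ * k i) *
            ((n * k i) * Real.exp (2 * Λ * (n * k i)) * (C * k i ^ 4))
            + k i * (C * k i ^ 4) * Real.exp (2 * Λ * ((n + 1 : ℕ) * k i)) := by
          refine add_le_add (mul_le_mul h4 ih (norm_nonneg _) (Real.exp_pos _).le) ?_
          exact le_mul_of_one_le_right (by positivity) h6
        _ = _ := by rw [h5]; push_cast; ring
  have hbd : ∀ i n, n ≤ L i → ‖e i n‖ ≤ T * Real.exp (2 * Λ * T) * C * k i ^ 4 := by
    intro i n hn
    refine (hgr i n hn).trans ?_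
    have := hk i
    have := hle i n hn
    rw [mul_assoc _ C]
    gcongr
  have hsm : ∀ i n, n ≤ L i → ‖e i n‖ < δ / 6 := fun i n hn => (hbd i n hn).trans_lt (hCK i)
  have base : O k (fun i => L i + 1) 4 0 e :=
    O_zero_iff.2 ⟨_, fun i n hn => hbd i n (Nat.lt_succ_iff.1 hn)⟩
  obtain ⟨E2, E3, E4, TR⟩ := H.trunc hk hK hKM ht
  have hkb := fun i n hn => H.kbound hΛ0 hΛ (hk i) (hK i) hKM hKΛ (htn i n hn) (ht i n hn)
    (hsm i n hn.le)
  have hsml := fun i n hn => H.small (hk i) (hK i) hKM (htn i n hn) (ht i n hn)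
  have hδ := H.hδ
  intro m
  induction m with
  | zero => intro _; exact base
  | succ m ih =>
    intro hm
    have ihm := ih (by omega)
    have hmq : m ≤ q := by omega
    have eL : O k L 4 m e := ihm.monoL (fun i => Nat.le_succ _)
    have hGCB : CB.{w, w} (dom E T δ) (m + 1) G := by
      refine CB.mono (m := q + 1) ⟨⟨M, H.hM⟩, G', H.hG', H.hCB.mono (by omega)⟩ (by omega)
    have gen : ∀ (c : ℝ) (a d : ι → ℕ → E), 0 ≤ c → c ≤ 1 → O k L 0 m a → O k L 4 m d →
        (∀ i n, n < L i → ‖a i n‖ < δ) → (∀ i n, n < L i → ‖a i n + d i n‖ < δ) →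
        O k L 4 m (fun i n => G (n * k i + c * k i, a i n + d i n) - G (n * k i + c * k i, a i n))
        := by
      intro c a d hc hc1 ha hd has hds
      have hmem : ∀ i n, n < L i → (0 : ℝ) ≤ n * k i + c * k i ∧ n * k i + c * k i ≤ T := by
        intro i n hn
        have h1 := ht i n hn
        have h2 := htn i n hn
        have h3 := hk i
        constructor
        · positivity
        · nlinarith
      have hb : O k L 0 m (fun i n => ((n * k i + c * k i, a i n) : ℝ × E)) := by
        refine O.prodMk (O.add (O_time hk (T := T) ?_ m) (O_const (fun i => c * k i) K ?_)) ha
        · intro i n hn; linarith [ht i n hn, hk i]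
        · intro i
          rw [Real.norm_of_nonneg (mul_nonneg hc (hk i).le)]
          simp only [pow_zero, mul_one]
          nlinarith [hk i, hK i]
      have hadd : ∀ i (n : ℕ), ((n * k i + c * k i, a i n) : ℝ × E) + ((0 : ℝ), d i n) =
          (n * k i + c * k i, a i n + d i n) := by
        intro i n; simp
      have := O_diff (dom_convex T δ) m 4 hk hK hGCB
        (fun i n hn => mem_dom (hmem i n hn).1 (hmem i n hn).2 (has i n hn))
        (d := fun i n => ((0 : ℝ), d i n))
        (fun i n hn => by
          rw [hadd]; exact mem_dom (hmem i n hn).1 (hmem i n hn).2 (hds i n hn))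
        hb (hd.map (ContinuousLinearMap.inr ℝ ℝ E))
      refine this.congr (fun i n hn => ?_)
      rw [hadd]
    have hhalf : ∀ x : ℝ, 1 / 2 * x = x / 2 := fun x => by ring
    have k1 : O k L 4 m (fun i n => κ1 f G (n * k i) (e i n)) := by
      have := gen 0 (fun _ _ => 0) e le_rfl zero_le_one (O_const (fun _ => (0 : E)) 0 (by simp))
        eL (fun i n hn => by simpa using hδ)
        (fun i n hn => by rw [zero_add]; linarith [hsm i n hn.le])
      refine this.congr (fun i n hn => ?_)
      rw [zero_mul, add_zero, zero_add, H.hG1 _ ⟨htn i n hn, hle i n hn.le⟩]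
      rfl
    have k2 : O k L 4 m (fun i n => κ2 f G (n * k i) (k i) (e i n)) := by
      have := gen (1 / 2) (fun i n => e2 f (n * k i) (k i))
        (fun i n => e i n + (k i / 2) • κ1 f G (n * k i) (e i n)) (by norm_num) (by norm_num)
        (E2.mono hmq) (eL.add ((O.weak hk hK (k1.kpow hk (1 / 2) 1)
          (by omega : 4 ≤ 5)).congr (fun i n _ => by module)))
        (fun i n hn => by linarith [(hsml i n hn).1]) (fun i n hn => (hkb i n hn).1)
      simp only [hhalf] at this
      exact this
    have k3 : O k L 4 m (fun i n => κ3 f G (n * k i) (k i) (e i n)) := by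
      have := gen (1 / 2) (fun i n => e3 f G (n * k i) (k i))
        (fun i n => e i n + (k i / 2) • κ2 f G (n * k i) (k i) (e i n)) (by norm_num)
        (by norm_num)
        (E3.mono hmq) (eL.add ((O.weak hk hK (k2.kpow hk (1 / 2) 1)
          (by omega : 4 ≤ 5)).congr (fun i n _ => by module)))
        (fun i n hn => by linarith [(hsml i n hn).2.1]) (fun i n hn => (hkb i n hn).2.1)
      simp only [hhalf] at this
      exact this
    have k4 : O k L 4 m (fun i n => κ4 f G (n * k i) (k i) (e i n)) := by
      have := gen 1 (fun i n => e4 f G (n * k i) (k i))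
        (fun i n => e i n + k i • κ3 f G (n * k i) (k i) (e i n)) (by norm_num)
        (by norm_num)
        (E4.mono hmq) (eL.add ((O.weak hk hK (k3.kpow hk 1 1)
          (by omega : 4 ≤ 5)).congr (fun i n _ => by module)))
        (fun i n hn => by linarith [(hsml i n hn).2.2]) (fun i n hn => (hkb i n hn).2.2.1)
      simp only [one_mul] at this
      exact this
    have ks : O k L 4 m (fun i n => κs f G (n * k i) (k i) (e i n)) :=
      ((k1.add (k2.smul hk 2)).add (k3.smul hk 2)).add k4
    rw [O_succ_iff hk]
    refine ⟨base, ?_⟩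
    have hfin : O k L 4 m (fun i => dl (k i) (e i)) := by
      refine ((ks.smul hk (1 / 6)).add (TR.mono hmq)).congr (fun i n hn => ?_)
      have hne := (hk i).ne'
      simp only [dl]
      rw [hstep i n hn]
      apply smul_right_injective E hne
      simp only [smul_smul, mul_inv_cancel₀ hne, one_smul]
      simp only [tau]
      module
    exact hfin

end step

theorem dl_formula {E : Type*} [NormedAddCommGroup E] [NormedSpace ℝ E] (k : ℝ) (m : ℕ)
    (y : ℕ → E) (n : ℕ) : (dl k)^[m] y n = (k ^ m)⁻¹ • ∑ i ∈ Finset.range (m + 1),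
      ((-1 : ℝ) ^ i * (m.choose i : ℝ)) • y (n + m - i) := by
  have h1 : ∀ m (y : ℕ → E), (dl k)^[m] y = fun n => (k ^ m)⁻¹ • (fwdDiff 1)^[m] y n := by
    intro m
    induction m with
    | zero => intro y; simp
    | succ m ih =>
      intro y
      simp only [Function.iterate_succ, Function.comp]
      rw [ih]
      have : dl k y = fun n => k⁻¹ • (fwdDiff 1 y) n := rfl
      funext n
      rw [this]
      have h2 : ∀ (z : ℕ → E), (fwdDiff 1)^[m] (fun n => k⁻¹ • z n) n =
          k⁻¹ • (fwdDiff 1)^[m] z n := by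
        intro z
        have := fwdDiff_iter_const_smul (1 : ℕ) k⁻¹ z m
        exact congrFun this n
      rw [h2, smul_smul, pow_succ, mul_inv]
  rw [h1]
  beta_reduce
  congr 1
  rw [fwdDiff_iter_eq_sum_shift, ← Finset.sum_range_reflect]
  refine Finset.sum_congr rfl (fun i hi => ?_)
  have hi' : i ≤ m := by simpa [Nat.lt_succ_iff] using hi
  have e1 : m + 1 - 1 - i = m - i := by omega
  have e2 : m - (m - i) = i := by omega
  have e3 : n + (m - i) • 1 = n + m - i := by simp; omega
  rw [e1, e2, e3, Nat.choose_symm hi', ← Int.cast_smul_eq_zsmul ℝ]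
  push_cast
  rfl

end DC

namespace DC

section fin

variable {V : Type w} [NormedAddCommGroup V] [NormedSpace ℝ V] [CompleteSpace V]

noncomputable def rkSeq (F : ℝ → V → V) (T : ℝ) (u0 : V) (N : ℕ) : ℕ → V
  | 0 => u0
  | n + 1 => rk4Step F ((n : ℝ) * (T / N)) (T / N) (rkSeq F T u0 N n)

theorem ctx_exists {T : ℝ} (hT : 0 < T) {q : ℕ} {F : ℝ → V → V} {u : ℝ → V}
    (hF : ContDiffOn ℝ (q + 5 : ℕ) (Function.uncurry F) (Set.Icc 0 T ×ˢ (Set.univ : Set V)))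
    (hu : ContDiffOn ℝ ((q + 5 : ℕ) + 1) u (Set.Icc 0 T))
    (hode : ∀ t ∈ Set.Icc 0 T, HasDerivAt u (F t (u t)) t) :
    ∃ (f : ℕ → ℝ → V) (G : ℝ × V → V) (G' : ℝ × V → (ℝ × V) →L[ℝ] V) (δ M Λ : ℝ),
      Ctx T δ M q f G G' ∧ 0 ≤ Λ ∧ (∀ y ∈ dom V T δ, ‖G' y‖ ≤ Λ) ∧ f 0 = u ∧
      ∀ t x, F t x = G (t, x - u t) := by
  have hun : UniqueDiffOn ℝ (Set.Icc 0 T) := uniqueDiffOn_Icc hT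
  set f : ℕ → ℝ → V := fun j => iteratedDerivWithin j u (Set.Icc 0 T) with hfdef
  set G : ℝ × V → V := fun y => F y.1 (u y.1 + y.2) with hGdef
  have hfs : ∀ j a : ℕ, a + j ≤ q + 6 → ContDiffOn ℝ a (f j) (Set.Icc 0 T) := by
    intro j
    induction j with
    | zero =>
      intro a ha
      simp only [hfdef, iteratedDerivWithin_zero]
      refine hu.of_le ?_
      exact_mod_cast (by omega : a ≤ q + 5 + 1)
    | succ j ih =>
      intro a ha
      have h1 := (ih (a + 1) (by omega)).derivWithin hun (m := a) (by exact_mod_cast le_rfl)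
      refine h1.congr (fun t _ => ?_)
      simp only [hfdef, iteratedDerivWithin_succ]
  have hder : ∀ j < 5, ∀ t ∈ Set.Icc 0 T,
      HasDerivWithinAt (f j) (f (j + 1) t) (Set.Icc 0 T) t := by
    intro j hj t ht
    have h1 := ((hfs j 1 (by omega)).differentiableOn (by simp) t ht).hasDerivWithinAt
    refine h1.congr_deriv ?_
    simp only [hfdef, iteratedDerivWithin_succ]
  have hG : ContDiffOn ℝ (q + 5 : ℕ) G (Set.Icc 0 T ×ˢ (Set.univ : Set V)) := by
    have hu' : ContDiffOn ℝ (q + 5 : ℕ) u (Set.Icc 0 T) := hu.of_le (by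
      exact_mod_cast Nat.le_succ _)
    have h1 : ContDiffOn ℝ (q + 5 : ℕ) (fun y : ℝ × V => u y.1)
        (Set.Icc 0 T ×ˢ (Set.univ : Set V)) :=
      hu'.comp contDiff_fst.contDiffOn (fun y hy => hy.1)
    have h2 : ContDiffOn ℝ (q + 5 : ℕ) (fun y : ℝ × V => (y.1, u y.1 + y.2))
        (Set.Icc 0 T ×ˢ (Set.univ : Set V)) :=
      contDiff_fst.contDiffOn.prodMk (h1.add contDiff_snd.contDiffOn)
    exact hF.comp h2 (fun y hy => ⟨hy.1, Set.mem_univ _⟩)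
  have hKc : IsCompact (Set.Icc 0 T ×ˢ ({0} : Set V)) := isCompact_Icc.prod isCompact_singleton
  obtain ⟨U, hU, hKU, hCB⟩ := CB_of_contDiffOn.{w, w} (hun.prod uniqueDiffOn_univ) hKc
    (Set.prod_mono le_rfl (Set.subset_univ _)) hG
  obtain ⟨δ, hδ, hδU⟩ := hKc.exists_thickening_subset_open hU hKU
  have hdom : dom V T δ ⊆ (Set.Icc 0 T ×ˢ (Set.univ : Set V)) ∩ U := by
    intro y hy
    refine ⟨⟨hy.1, Set.mem_univ _⟩, hδU ?_⟩
    rw [Metric.mem_thickening_iff]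
    refine ⟨(y.1, 0), ⟨hy.1, rfl⟩, ?_⟩
    rw [Prod.dist_eq]
    simpa [hδ] using hy.2
  have hCB' := CB.monoD hdom hCB
  obtain ⟨⟨M, hM⟩, G', hG', hCB1⟩ := hCB'
  obtain ⟨Λ, hΛ⟩ := hCB1.bdd
  refine ⟨f, G, G', δ, M, max Λ 0, ⟨hδ, hder, ?_, hG', hCB1.mono (by omega), hM, ?_⟩,
    le_max_right _ _, fun y hy => (hΛ y hy).trans (le_max_left _ _), ?_, ?_⟩
  · intro j hj
    obtain ⟨W, _, hKW, h1⟩ := CB_of_contDiffOn.{0, w} hun isCompact_Icc le_rfl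
      (hfs j q (by omega))
    exact CB.monoD (D := Set.Icc 0 T ∩ W) (fun y hy => ⟨hy, hKW hy⟩) h1
  · intro t ht
    simp only [hGdef, hfdef, add_zero, iteratedDerivWithin_one]
    exact ((hode t ht).hasDerivWithinAt.derivWithin (hun t ht)).symm
  · simp only [hfdef, iteratedDerivWithin_zero]
  · intro t x; simp [hGdef]

theorem rk_step {F : ℝ → V → V} {u : ℝ → V} {f : ℕ → ℝ → V} {G : ℝ × V → V}
    (hf0 : f 0 = u) (hG : ∀ t x, F t x = G (t, x - u t)) {t k : ℝ} (hk : 0 < k) (x : V) :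
    rk4Step F t k x - u (t + k) = (x - u t) + (k / 6) • κs f G t k (x - u t)
      + k • tau f G t k := by
  have h1 : F t x = f 1 t + κ1 f G t (x - u t) := by
    rw [hG, κ1]; abel
  have h2 : F (t + k / 2) (x + (k / 2) • F t x) = K2 f G t k + κ2 f G t k (x - u t) := by
    rw [hG, h1, κ2]
    rw [add_sub_cancel]
    congr 2
    rw [e2, hf0]; module
  have h3 : F (t + k / 2) (x + (k / 2) • F (t + k / 2) (x + (k / 2) • F t x)) =
      K3 f G t k + κ3 f G t k (x - u t) := by
    rw [h2, hG, κ3]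
    rw [add_sub_cancel]
    congr 2
    rw [e3, hf0]; module
  have h4 : F (t + k) (x + k • F (t + k / 2) (x + (k / 2) • F (t + k / 2)
      (x + (k / 2) • F t x))) = K4 f G t k + κ4 f G t k (x - u t) := by
    rw [h3, hG, κ4]
    rw [add_sub_cancel]
    congr 2
    rw [e4, hf0]; module
  simp only [rk4Step]
  rw [h4, h3, h2, h1]
  simp only [κs, tau, smul_sub, smul_smul, mul_inv_cancel₀ hk.ne', one_smul, hf0]
  module

theorem large {T : ℝ} (hT : 0 < T) {q : ℕ} {F : ℝ → V → V} {u : ℝ → V} {u0 : V}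
    {f : ℕ → ℝ → V} {G : ℝ × V → V} {G' : ℝ × V → (ℝ × V) →L[ℝ] V} {δ M Λ : ℝ}
    (H : Ctx T δ M q f G G') (hΛ0 : 0 ≤ Λ) (hΛ : ∀ y ∈ dom V T δ, ‖G' y‖ ≤ Λ) (hf0 : f 0 = u)
    (hG : ∀ t x, F t x = G (t, x - u t)) (hu0 : u 0 = u0) :
    ∃ N1 : ℕ, ∃ C : ℝ, ∀ N, N1 ≤ N → 0 < N → ∀ m ≤ q + 1, ∀ n, n + m ≤ N →
      ‖(dl (T / N))^[m] (fun n => rkSeq F T u0 N n - u ((n : ℝ) * (T / N))) n‖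
        ≤ C * (T / N) ^ 4 := by
  have hδ := H.hδ
  have hM0 : 0 ≤ M := (norm_nonneg _).trans
    (H.hM (0, 0) (mem_dom le_rfl hT.le (by simpa using hδ)))
  set K0 : ℝ := min (δ / (8 * (M + 1))) (1 / (Λ + 1)) with hK0
  have hK0pos : 0 < K0 := lt_min (by positivity) (by positivity)
  have hKM : 4 * K0 * M < δ := by
    have h1 : K0 ≤ δ / (8 * (M + 1)) := min_le_left _ _
    rw [le_div_iff₀ (by positivity)] at h1
    nlinarith
  have hKΛ : K0 * Λ ≤ 1 := by
    have h1 : K0 ≤ 1 / (Λ + 1) := min_le_right _ _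
    rw [le_div_iff₀ (by positivity)] at h1
    nlinarith
  have htime : ∀ N : ℕ, 0 < N → ∀ n, n < N → (n : ℝ) * (T / N) + T / N ≤ T := by
    intro N hN n hn
    have hN' : (0 : ℝ) < N := by exact_mod_cast hN
    have h1 : (n : ℝ) + 1 ≤ N := by exact_mod_cast hn
    have h2 : (n : ℝ) * (T / N) + T / N = ((n : ℝ) + 1) * T / N := by ring
    rw [h2, div_le_iff₀ hN']
    nlinarith
  have hkpos : ∀ N : ℕ, 0 < N → 0 < T / N := by
    intro N hN
    have hN' : (0 : ℝ) < N := by exact_mod_cast hN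
    positivity
  have htr := (H.trunc (ι := {N : ℕ // 0 < N ∧ T / N ≤ K0}) (k := fun N => T / (N.1 : ℝ))
    (L := fun N => N.1) (K := K0) (fun N => hkpos _ N.2.1) (fun N => N.2.2) hKM
    (fun N n hn => htime _ N.2.1 n hn)).2.2.2
  obtain ⟨C, hC0, hC⟩ := htr.nn (fun N => hkpos _ N.2.1)
  set B : ℝ := T * Real.exp (2 * Λ * T) * C with hB
  have hB0 : 0 ≤ B := by positivity
  set K1 : ℝ := min K0 (min 1 (δ / (12 * (B + 1)))) with hK1
  have hK1pos : 0 < K1 := lt_min hK0pos (lt_min one_pos (by positivity))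
  obtain ⟨N1, hN1⟩ := exists_nat_gt (T / K1)
  have hsmall : ∀ N : ℕ, N1 ≤ N → 0 < N → T / N ≤ K1 := by
    intro N hN hN0
    have hN' : (0 : ℝ) < N := by exact_mod_cast hN0
    have h1 : (N1 : ℝ) ≤ N := by exact_mod_cast hN
    rw [div_le_iff₀ hN']
    rw [div_lt_iff₀ hK1pos] at hN1
    nlinarith
  have hsm0 : ∀ N : ℕ, N1 ≤ N → 0 < N → T / N ≤ K0 := fun N h h' =>
    (hsmall N h h').trans (min_le_left _ _)
  have fam := H.family hΛ0 hΛ (ι := {N : ℕ // N1 ≤ N ∧ 0 < N}) (k := fun N => T / (N.1 : ℝ))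
    (L := fun N => N.1) (K := K0) (C := C) (fun N => hkpos _ N.2.2)
    (fun N => hsm0 _ N.2.1 N.2.2) hKM hKΛ
    (fun N n hn => htime _ N.2.2 n hn) hT.le hC0
    (fun N n hn => hC ⟨N.1, N.2.2, hsm0 _ N.2.1 N.2.2⟩ 0 (Nat.zero_le _) n hn)
    (fun N => by
      have h0 := hkpos _ N.2.2
      have h1 := hsmall _ N.2.1 N.2.2
      have h2 : T / (N.1 : ℝ) ≤ 1 := h1.trans ((min_le_right _ _).trans (min_le_left _ _))
      have h3 : T / (N.1 : ℝ) ≤ δ / (12 * (B + 1)) :=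
        h1.trans ((min_le_right _ _).trans (min_le_right _ _))
      have h4 : (T / (N.1 : ℝ)) ^ 4 ≤ T / (N.1 : ℝ) := pow_le_of_le_one h0.le h2 (by norm_num)
      rw [le_div_iff₀ (by positivity)] at h3
      have h5 : B * (T / (N.1 : ℝ)) ^ 4 ≤ B * (T / (N.1 : ℝ)) := mul_le_mul_of_nonneg_left h4 hB0
      nlinarith)
    (e := fun N n => rkSeq F T u0 N.1 n - u ((n : ℝ) * (T / N.1)))
    (fun N => by simp [rkSeq, hu0])
    (fun N n hn => by
      have := rk_step hf0 hG (t := (n : ℝ) * (T / N.1)) (hkpos _ N.2.2) (rkSeq F T u0 N.1 n)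
      rw [← this]
      have h2 : ((n + 1 : ℕ) : ℝ) * (T / N.1) = (n : ℝ) * (T / N.1) + T / N.1 := by
        push_cast; ring
      rw [h2]
      rfl)
  obtain ⟨C', hC'⟩ := fam (q + 1) le_rfl
  exact ⟨N1, C', fun N h1 h2 m hm n hn => hC' ⟨N, h1, h2⟩ m hm n (Nat.lt_succ_of_le hn)⟩

end fin

end DC


/-- **Theorem 3.2: deferred correction condition for RK4.**
Let `p ≥ 6`, `F ∈ C^p([0,T] × X, X)`, and suppose the IVP `u' = F(t,u)`, `u(0) = u₀`
has a (unique) solution `u ∈ C^{p+1}([0,T], X)`. For `N > 0`, `k = T/N`, `t_n = nk`, let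
`{u^{4,n}}` be the RK4 sequence started at `u₀`. Then for every `0 ≤ m ≤ p - 4` there is
a constant `C`, independent of `k`, such that
`‖D₊^m (u^{4,n} - u(t_n))‖ ≤ C k^4` for all `n = 0, …, N - m`. -/
theorem rk4_deferred_correction_condition
    (T : ℝ) (hT : 0 < T) (p : ℕ) (hp : 6 ≤ p) (F : ℝ → X → X)
    (hF : ContDiffOn ℝ p (Function.uncurry F) (Set.Icc 0 T ×ˢ (Set.univ : Set X)))
    (u : ℝ → X) (u0 : X)
    (hu : ContDiffOn ℝ (p + 1) u (Set.Icc 0 T))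
    (hu0 : u 0 = u0)
    (hode : ∀ t ∈ Set.Icc 0 T, HasDerivAt u (F t (u t)) t) :
    ∀ m : ℕ, m ≤ p - 4 →
      ∃ C : ℝ, ∀ N : ℕ, 0 < N →
        ∀ v : ℕ → X, v 0 = u0 →
          (∀ n : ℕ, n < N → v (n + 1) = rk4Step F ((n : ℝ) * (T / N)) (T / N) (v n)) →
          ∀ n : ℕ, n + m ≤ N →
            ‖((T / N) ^ m)⁻¹ • ∑ i ∈ Finset.range (m + 1),
                ((-1 : ℝ) ^ i * (m.choose i : ℝ)) •
                  (v (n + m - i) - u (((n + m - i : ℕ) : ℝ) * (T / N)))‖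
              ≤ C * (T / N) ^ 4 := by
  intro m hm
  obtain ⟨q, rfl⟩ : ∃ q, p = q + 5 := ⟨p - 5, by omega⟩
  obtain ⟨f, G, G', δ, M, Λ, H, hΛ0, hΛ, hf0, hG⟩ := DC.ctx_exists hT hF hu hode
  set e : ℕ → ℕ → X := fun N n => DC.rkSeq F T u0 N n - u ((n : ℝ) * (T / N)) with he
  obtain ⟨N1, C, hC⟩ := DC.large hT H hΛ0 hΛ hf0 hG hu0
  set Q : ℕ → ℕ → ℝ := fun N n => ‖(DC.dl (T / N))^[m] (e N) n‖ with hQ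
  set S : ℝ := ∑ N ∈ Finset.range N1, ∑ n ∈ Finset.range (N + 1), Q N n / (T / N) ^ 4 with hS
  have hterm : ∀ N n, 0 ≤ Q N n / (T / N) ^ 4 := fun N n => by
    have := norm_nonneg ((DC.dl (T / N))^[m] (e N) n)
    positivity
  have hS0 : 0 ≤ S := Finset.sum_nonneg fun N _ => Finset.sum_nonneg fun n _ => hterm N n
  refine ⟨|C| + S, ?_⟩
  intro N hN v hv0 hv n hn
  have hN' : (0 : ℝ) < N := by exact_mod_cast hN
  have hk4 : (0 : ℝ) < (T / N) ^ 4 := by positivity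
  have hvr : ∀ n ≤ N, v n = DC.rkSeq F T u0 N n := by
    intro n
    induction n with
    | zero => intro _; exact hv0
    | succ n ih =>
      intro hn
      rw [hv n (by omega), ih (by omega)]
      rfl
  have hsum := DC.dl_formula (T / N) m (fun n => v n - u ((n : ℝ) * (T / N))) n
  rw [← hsum, DC.dl_congr _ _ _ (e N) n (fun j hj => by simp only [he]; rw [hvr j (by omega)])]
  rcases Nat.lt_or_ge N N1 with hlt | hge
  · have h1 : Q N n / (T / N) ^ 4 ≤ S := by
      refine le_trans ?_ (Finset.single_le_sum (f := fun N => ∑ n ∈ Finset.range (N + 1),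
        Q N n / (T / N) ^ 4) (fun N _ => Finset.sum_nonneg fun n _ => hterm N n)
        (Finset.mem_range.2 hlt))
      exact Finset.single_le_sum (f := fun n => Q N n / (T / N) ^ 4)
        (fun n _ => hterm N n) (Finset.mem_range.2 (by omega))
    rw [div_le_iff₀ hk4] at h1
    refine h1.trans (mul_le_mul_of_nonneg_right ?_ hk4.le)
    linarith [abs_nonneg C]
  · refine (hC N hge hN m (by omega) n hn).trans (mul_le_mul_of_nonneg_right ?_ hk4.le)
    linarith [le_abs_self C]
end

section
/- Let X be a Banach space, T > 0, F ∈ C^6([0,T] × X, X) satisfying ‖F(t,x) − F(t,y)‖ ≤ μ‖x − y‖ for some μ ≥ 0 and all (t,x,y) ∈ [0,T] × X × X, and suppose u ∈ C^7([0,T], X) solves u'(t) = F(t, u(t)) on [0,T]. For k > 0 and t with t + k ≤ T define A(t,k) = (125/384)(−3u(t) − u(t + k/5) + 18u(t + 2k/5) − 18u(t + 3k/5) + u(t + 4k/5) + 3u(t + k)) and B(t,k) = (25/768)(145u(t) − 387u(t + k/5) + 402u(t + 2k/5) − 238u(t + 3k/5) + 93u(t + 4k/5) − 15u(t + k)). Then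 there exists a constant C, independent of k and t, such that ‖u(t+k) − u(t) − A(t,k) − k·F(t + k/2, u(t) + (k/2)F(t, u(t)) + B(t,k))‖ ≤ C k^7 for all k ∈ (0, T] and t ∈ [0, T − k]. -/
open Finset


theorem dc6_taylor {X : Type*} [NormedAddCommGroup X] [NormedSpace ℝ X] (T M : ℝ) (n : ℕ) :
    ∀ w : ℕ → ℝ → X,
    (∀ i < n, ∀ x ∈ Set.Icc 0 T, HasDerivWithinAt (w i) (w (i + 1) x) (Set.Icc 0 T) x) →
    (∀ x ∈ Set.Icc 0 T, ‖w n x‖ ≤ M) → ∀ t ∈ Set.Icc 0 T, ∀ x ∈ Set.Icc t T,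
    ‖w 0 x - ∑ i ∈ Finset.range n, ((x - t) ^ i / (i.factorial : ℝ)) • w i t‖
      ≤ M * (x - t) ^ n := by
  induction n with
  | zero =>
    intro w _ hM t ht x hx
    simpa using hM x ⟨ht.1.trans hx.1, hx.2⟩
  | succ n ih =>
    intro w hw hM t ht x hx
    have ih' := ih (fun i => w (i + 1)) (fun i hi => hw (i + 1) (by omega)) hM t ht
    have hM0 : 0 ≤ M := (norm_nonneg _).trans (hM t ht)
    have hsub : Set.Icc t x ⊆ Set.Icc 0 T := fun y hy => ⟨ht.1.trans hy.1, hy.2.trans hx.2⟩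
    have hd : ∀ y ∈ Set.Icc t x, HasDerivWithinAt
        (fun y => w 0 y - ∑ i ∈ Finset.range (n + 1), ((y - t) ^ i / (i.factorial : ℝ)) • w i t)
        (w 1 y - ∑ i ∈ Finset.range n, ((y - t) ^ i / (i.factorial : ℝ)) • w (i + 1) t)
        (Set.Icc t x) y := by
      intro y hy
      refine ((hw 0 (by omega) y (hsub hy)).mono hsub).sub ?_
      have h2 : HasDerivAt
          (fun y => ∑ i ∈ Finset.range (n + 1), ((y - t) ^ i / (i.factorial : ℝ)) • w i t)
          (∑ i ∈ Finset.range (n + 1),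
            (((i : ℝ) * (y - t) ^ (i - 1) * 1) / (i.factorial : ℝ)) • w i t) y := by
        refine HasDerivAt.fun_sum fun i _ => ?_
        exact ((((hasDerivAt_id y).sub_const t).pow i).div_const _).smul_const _
      rw [Finset.sum_range_succ'] at h2
      refine HasDerivAt.hasDerivWithinAt (h2.congr_deriv ?_)
      simp only [Nat.cast_zero, zero_mul, zero_div, zero_smul, add_zero]
      refine Finset.sum_congr rfl fun i _ => ?_
      congr 1
      rw [Nat.factorial_succ]
      push_cast
      have : (i.factorial : ℝ) ≠ 0 := by positivity
      have : (i : ℝ) + 1 ≠ 0 := by positivity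
      field_simp
    have key := Convex.norm_image_sub_le_of_norm_hasDerivWithin_le (C := M * (x - t) ^ n) hd
      (fun y hy => (ih' y ⟨hy.1, hy.2.trans hx.2⟩).trans (by
        have := sub_nonneg.2 hy.1
        have := hy.2
        gcongr)) (convex_Icc t x) (Set.left_mem_Icc.2 hx.1) (Set.right_mem_Icc.2 hx.1)
    have h0 : (∑ i ∈ Finset.range (n + 1), ((t - t) ^ i / (i.factorial : ℝ)) • w i t) = w 0 t := by
      rw [Finset.sum_range_succ']
      simp
    beta_reduce at key
    rw [h0, sub_self, sub_zero] at key
    rw [Real.norm_of_nonneg (sub_nonneg.2 hx.1), mul_assoc, ← pow_succ] at key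
    simpa using key

theorem dc6_six {X : Type*} [NormedAddCommGroup X] [NormedSpace ℝ X] (r a b c d e f : ℝ)
    (x y z p q s : X) (hx : ‖x‖ ≤ r) (hy : ‖y‖ ≤ r) (hz : ‖z‖ ≤ r) (hp : ‖p‖ ≤ r) (hq : ‖q‖ ≤ r)
    (hs : ‖s‖ ≤ r) : ‖a • x + b • y + c • z + d • p + e • q + f • s‖ ≤
      (|a| + |b| + |c| + |d| + |e| + |f|) * r := by
  have h : ∀ (a : ℝ) (x : X), ‖x‖ ≤ r → ‖a • x‖ ≤ |a| * r := fun a x hx => by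
    rw [norm_smul, Real.norm_eq_abs]; gcongr
  simp only [add_mul]
  exact norm_add_le_of_le (norm_add_le_of_le (norm_add_le_of_le (norm_add_le_of_le
    (norm_add_le_of_le (h a x hx) (h b y hy)) (h c z hz)) (h d p hp)) (h e q hq)) (h f s hs)

/-- **local truncation error of the corrected explicit midpoint step.**
Let `F ∈ C^6([0,T] × X, X)` be Lipschitz in its second variable with constant `μ ≥ 0`,
and let `u ∈ C^7([0,T], X)` solve `u' = F(t, u)` on `[0,T]`. With
`A(t,k) = (125/384)(−3u(t) − u(t+k/5) + 18u(t+2k/5) − 18u(t+3k/5) + u(t+4k/5) + 3u(t+k))`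
and
`B(t,k) = (25/768)(145u(t) − 387u(t+k/5) + 402u(t+2k/5) − 238u(t+3k/5) + 93u(t+4k/5) − 15u(t+k))`,
there is a constant `C`, independent of `k` and `t`, such that
`‖u(t+k) − u(t) − A(t,k) − k F(t+k/2, u(t) + (k/2)F(t,u(t)) + B(t,k))‖ ≤ C k⁷`
for all `k ∈ (0,T]` and `t ∈ [0, T−k]`. -/
theorem dc6rk24_local_truncation_error
    {X : Type*} [NormedAddCommGroup X] [NormedSpace ℝ X] [CompleteSpace X]
    (T : ℝ) (hT : 0 < T) (F : ℝ → X → X) (μ : ℝ) (hμ : 0 ≤ μ)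
    (hF : ContDiffOn ℝ 6 (Function.uncurry F) (Set.Icc 0 T ×ˢ (Set.univ : Set X)))
    (hLip : ∀ t ∈ Set.Icc 0 T, ∀ x y : X, ‖F t x - F t y‖ ≤ μ * ‖x - y‖)
    (u : ℝ → X)
    (hu : ContDiffOn ℝ 7 u (Set.Icc 0 T))
    (hode : ∀ t ∈ Set.Icc 0 T, HasDerivAt u (F t (u t)) t) :
    ∃ C : ℝ, ∀ k : ℝ, 0 < k → k ≤ T → ∀ t ∈ Set.Icc 0 (T - k),
      ‖u (t + k) - u t
          - (125 / 384 : ℝ) • ((-3 : ℝ) • u t - u (t + k / 5) + (18 : ℝ) • u (t + 2 * k / 5)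
              - (18 : ℝ) • u (t + 3 * k / 5) + u (t + 4 * k / 5) + (3 : ℝ) • u (t + k))
          - k • F (t + k / 2)
              (u t + (k / 2) • F t (u t)
                + (25 / 768 : ℝ) • ((145 : ℝ) • u t - (387 : ℝ) • u (t + k / 5)
                    + (402 : ℝ) • u (t + 2 * k / 5) - (238 : ℝ) • u (t + 3 * k / 5)
                    + (93 : ℝ) • u (t + 4 * k / 5) - (15 : ℝ) • u (t + k)))‖
        ≤ C * k ^ 7 := by
  classical
  have hU : UniqueDiffOn ℝ (Set.Icc 0 T) := uniqueDiffOn_Icc hT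
  set w : ℕ → ℝ → X := fun i => iteratedDerivWithin i u (Set.Icc 0 T) with hwdef
  have hw : ∀ i < 7, ∀ x ∈ Set.Icc 0 T,
      HasDerivWithinAt (w i) (w (i + 1) x) (Set.Icc 0 T) x := by
    intro i hi x hx
    have h := (hu.differentiableOn_iteratedDerivWithin (m := i) (by exact_mod_cast hi) hU) x hx
    have h2 := h.hasDerivWithinAt
    simp only [hwdef]
    rw [iteratedDerivWithin_succ]
    exact h2
  have hbd : ∀ i ≤ 7, ∃ M, ∀ x ∈ Set.Icc 0 T, ‖w i x‖ ≤ M := by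
    intro i hi
    exact isCompact_Icc.exists_bound_of_continuousOn
      (hu.continuousOn_iteratedDerivWithin (by exact_mod_cast hi) hU)
  have hw0 : ∀ x, w 0 x = u x := fun x => by simp [hwdef]
  have hw1 : ∀ x ∈ Set.Icc 0 T, w 1 x = F x (u x) := by
    intro x hx
    simp only [hwdef]
    rw [iteratedDerivWithin_one]
    exact (hode x hx).hasDerivWithinAt.derivWithin (hU x hx)
  obtain ⟨M6, hM6⟩ := hbd 6 (by norm_num)
  obtain ⟨M7, hM7⟩ := hbd 7 (by norm_num)
  have hM60 : 0 ≤ M6 := (norm_nonneg _).trans (hM6 0 ⟨le_rfl, hT.le⟩)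
  have hM70 : 0 ≤ M7 := (norm_nonneg _).trans (hM7 0 ⟨le_rfl, hT.le⟩)
  have ta6 := dc6_taylor T M6 6 w (fun i hi => hw i (by omega)) hM6
  have ta7 := dc6_taylor T M7 7 w (fun i hi => hw i (by omega)) hM7
  have tb6 := dc6_taylor T M7 6 (fun i => w (i + 1)) (fun i hi => hw (i + 1) (by omega)) hM7
  refine ⟨100 * M7 + μ * (100 * M6), fun k hk hkT t ht => ?_⟩
  have ht0 : t ∈ Set.Icc 0 T := ⟨ht.1, by linarith [ht.2]⟩
  have hmid : t + k / 2 ∈ Set.Icc 0 T := ⟨by linarith [ht.1], by linarith [ht.2]⟩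
  have key : ∀ (v : ℕ → ℝ → X) (M : ℝ) (n : ℕ), 0 ≤ M → (∀ t ∈ Set.Icc 0 T, ∀ x ∈ Set.Icc t T,
      ‖v 0 x - ∑ i ∈ Finset.range n, ((x - t) ^ i / (i.factorial : ℝ)) • v i t‖
      ≤ M * (x - t) ^ n) → ∀ h : ℝ, 0 ≤ h → h ≤ k → ∃ R : X, ‖R‖ ≤ M * k ^ n ∧
        v 0 (t + h) = ∑ i ∈ Finset.range n, (h ^ i / (i.factorial : ℝ)) • v i t + R := by
    intro v M n hM hv h h0 hhk
    have := hv t ht0 (t + h) ⟨by linarith, by linarith [ht.2]⟩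
    rw [add_sub_cancel_left] at this
    refine ⟨_, this.trans ?_, (add_sub_cancel _ _).symm⟩
    gcongr
  rw [← hw1 t ht0]
  have hY : ‖(u t + (k / 2) • w 1 t
                + (25 / 768 : ℝ) • ((145 : ℝ) • u t - (387 : ℝ) • u (t + k / 5)
                    + (402 : ℝ) • u (t + 2 * k / 5) - (238 : ℝ) • u (t + 3 * k / 5)
                    + (93 : ℝ) • u (t + 4 * k / 5) - (15 : ℝ) • u (t + k))) - u (t + k / 2)‖
      ≤ 100 * (M6 * k ^ 6) := by
    obtain ⟨R0, hR0, e0⟩ := key w M6 6 hM60 ta6 (k / 5) (by linarith) (by linarith)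
    obtain ⟨R1, hR1, e1⟩ := key w M6 6 hM60 ta6 (2 * k / 5) (by linarith) (by linarith)
    obtain ⟨R2, hR2, e2⟩ := key w M6 6 hM60 ta6 (3 * k / 5) (by linarith) (by linarith)
    obtain ⟨R3, hR3, e3⟩ := key w M6 6 hM60 ta6 (4 * k / 5) (by linarith) (by linarith)
    obtain ⟨R4, hR4, e4⟩ := key w M6 6 hM60 ta6 (k) (by linarith) (by linarith)
    obtain ⟨R5, hR5, e5⟩ := key w M6 6 hM60 ta6 (k / 2) (by linarith) (by linarith)
    simp only [hw0, Finset.sum_range_succ, Finset.sum_range_zero, Nat.factorial] at e0 e1 e2 e3 e4 e5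
    rw [e0, e1, e2, e3, e4, e5]
    have := dc6_six (M6 * k ^ 6) (-(25 / 768) * 387) ((25 / 768) * 402) (-(25 / 768) * 238)
      ((25 / 768) * 93) (-(25 / 768) * 15) (-1) R0 R1 R2 R3 R4 R5 hR0 hR1 hR2 hR3 hR4 hR5
    refine le_trans (le_of_eq ?_) (this.trans ?_)
    · congr 1
      push_cast
      module
    · gcongr
      norm_num [abs_of_nonneg, abs_of_neg]
  have hA : ‖u (t + k) - u t
          - (125 / 384 : ℝ) • ((-3 : ℝ) • u t - u (t + k / 5) + (18 : ℝ) • u (t + 2 * k / 5)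
              - (18 : ℝ) • u (t + 3 * k / 5) + u (t + 4 * k / 5) + (3 : ℝ) • u (t + k))
          - k • w 1 (t + k / 2)‖ ≤ 100 * (M7 * k ^ 7) := by
    obtain ⟨R0, hR0, e0⟩ := key w M7 7 hM70 ta7 (k / 5) (by linarith) (by linarith)
    obtain ⟨R1, hR1, e1⟩ := key w M7 7 hM70 ta7 (2 * k / 5) (by linarith) (by linarith)
    obtain ⟨R2, hR2, e2⟩ := key w M7 7 hM70 ta7 (3 * k / 5) (by linarith) (by linarith)
    obtain ⟨R3, hR3, e3⟩ := key w M7 7 hM70 ta7 (4 * k / 5) (by linarith) (by linarith)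
    obtain ⟨R4, hR4, e4⟩ := key w M7 7 hM70 ta7 (k) (by linarith) (by linarith)
    obtain ⟨R5, hR5, e5⟩ := key (fun i => w (i + 1)) M7 6 hM70 tb6 (k / 2) (by linarith) (by linarith)
    have hR5k : ‖k • R5‖ ≤ M7 * k ^ 7 := by
      rw [norm_smul, Real.norm_of_nonneg hk.le]
      calc k * ‖R5‖ ≤ k * (M7 * k ^ 6) := by gcongr
        _ = _ := by ring
    simp only [hw0, Finset.sum_range_succ, Finset.sum_range_zero, Nat.factorial, zero_add,
      Nat.reduceAdd] at e0 e1 e2 e3 e4 e5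
    rw [e0, e1, e2, e3, e4, e5]
    have := dc6_six (M7 * k ^ 7) (125 / 384) (-(125 / 384) * 18) ((125 / 384) * 18)
      (-(125 / 384)) (1 - (125 / 384) * 3) (-1) R0 R1 R2 R3 R4 (k • R5) hR0 hR1 hR2 hR3 hR4 hR5k
    refine le_trans (le_of_eq ?_) (this.trans ?_)
    · congr 1
      push_cast
      module
    · gcongr
      norm_num [abs_of_nonneg, abs_of_neg]
  rw [hw1 _ hmid] at hA
  have hL := (hLip _ hmid _ _).trans (mul_le_mul_of_nonneg_left hY hμ)
  have hkL := mul_le_mul_of_nonneg_left hL hk.le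
  rw [← Real.norm_of_nonneg hk.le, ← norm_smul, Real.norm_of_nonneg hk.le, smul_sub] at hkL
  have hfin := norm_sub_le_of_le hA hkL
  rw [sub_sub, add_sub_cancel] at hfin
  refine hfin.trans (le_of_eq ?_)
  ring
end
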